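/- arXiv:1803.00540 — 4 statements merged into one kernel-verified Lean document; each statement's English description precedes it below -/
import Mathlib

section
/- A permutation x in A_N lies in A_N^o (i.e., all cycles of x, including fixed points, have odd length) if and only if ℓ_3(x) = ℓ_2(x)/2, where ℓ_2(x) = N - cyc(x) is the reflection length with respect to transpositions. -/
open Equiv Equiv.Perm

/-- The word length of `x` with respect to a generating set `T`. -/
noncomputable def lenT {G : Type*} [Group G] (T : Set G) (x : G) : ℕ :=
  sInf {n | ∃ l : List G, (∀ t ∈ l, t ∈ T) ∧ l.prod = x ∧ l.length = n}

/-- The `T`-prefix order. -/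
def leT {G : Type*} [Group G] (T : Set G) (x y : G) : Prop :=
  lenT T y = lenT T x + lenT T (x⁻¹ * y)

/-- The set of 3-cycles of the symmetric group on `Fin N`. -/
def threeCycles (N : ℕ) : Set (Perm (Fin N)) := {σ | σ.IsThreeCycle}

/-- The set of transpositions of the symmetric group on `Fin N`. -/
def transpositions (N : ℕ) : Set (Perm (Fin N)) := {σ | σ.IsSwap}

/-- The number of odd cycles of a permutation, counting fixed points. -/
def ocyc {N : ℕ} (x : Perm (Fin N)) : ℕ :=
  (x.cycleType.filter (fun n => Odd n)).card + (N - x.cycleType.sum)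


lemma aux_step3 {N : ℕ} (f : Fin N → Fin N) (y c : Perm (Fin N)) (hc : c.IsThreeCycle) (k : ℕ)
    (h1 : ∀ a, f (y a) = f a) (h2 : N ≤ (Finset.univ.image f).card + 2 * k)
    (h3 : N = (Finset.univ.image f).card + 2 * k →
      ∀ a, Odd (Finset.univ.filter (fun b => f b = f a)).card) :
    ∃ f' : Fin N → Fin N, (∀ a, f' ((c * y) a) = f' a) ∧
      N ≤ (Finset.univ.image f').card + 2 * (k + 1) ∧
      (N = (Finset.univ.image f').card + 2 * (k + 1) →
      ∀ a, Odd (Finset.univ.filter (fun b => f' b = f' a)).card) := by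
  classical
  obtain ⟨u, v, w, huv, huw, hvw, hs⟩ := Finset.card_eq_three.mp hc.card_support
  let g : Fin N → Fin N := fun t => if t = f v ∨ t = f w then f u else t
  have hgu : g (f u) = f u := by simp only [g]; split_ifs <;> rfl
  have hgv : g (f v) = f u := by simp [g]
  have hgw : g (f w) = f u := by simp [g]
  have hgo : ∀ t, t ≠ f v → t ≠ f w → g t = t := by intro t a b; simp [g, a, b]
  have hsub : Finset.univ.image f \ {f v, f w} ⊆ Finset.univ.image (g ∘ f) := by
    intro t ht
    simp only [Finset.mem_sdiff, Finset.mem_image, Finset.mem_univ, true_and,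
      Finset.mem_insert, Finset.mem_singleton, not_or] at ht
    obtain ⟨⟨a, rfl⟩, hv, hw⟩ := ht
    exact Finset.mem_image.mpr ⟨a, Finset.mem_univ _, hgo _ hv hw⟩
  have hcard := Finset.card_le_card hsub
  have hsd := Finset.le_card_sdiff ({f v, f w} : Finset (Fin N)) (Finset.univ.image f)
  have h2c : ({f v, f w} : Finset (Fin N)).card ≤ 2 := Finset.card_le_two
  refine ⟨g ∘ f, ?_, by omega, ?_⟩
  · have key : ∀ z, g (f (c z)) = g (f z) := by
      intro z
      by_cases hz : z ∈ c.support
      · have hz' : c z ∈ c.support := by simpa using hz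
        rw [hs] at hz hz'
        simp only [Finset.mem_insert, Finset.mem_singleton] at hz hz'
        have : ∀ t, (t = u ∨ t = v ∨ t = w) → g (f t) = f u := by
          rintro t (rfl | rfl | rfl) <;> assumption
        rw [this _ hz, this _ hz']
      · rw [Perm.notMem_support.mp hz]
    intro a
    simp [key, h1]
  · intro heq
    have e1 : ({f v, f w} : Finset (Fin N)).card = 2 := by omega
    have e2 : N = (Finset.univ.image f).card + 2 * k := by omega
    have nvw : f v ≠ f w := by
      intro h; simp [h] at e1
    have e3 : f u ≠ f v ∧ f u ≠ f w := by
      by_contra hcon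
      have : f u ∈ ({f v, f w} : Finset (Fin N)) := by
        simp only [Finset.mem_insert, Finset.mem_singleton]; tauto
      have hmem : f u ∈ Finset.univ.image (g ∘ f) :=
        Finset.mem_image.mpr ⟨u, Finset.mem_univ _, hgu⟩
      have hlt : Finset.univ.image f \ {f v, f w} ⊂ Finset.univ.image (g ∘ f) := by
        refine (Finset.ssubset_iff_of_subset hsub).mpr ⟨f u, hmem, ?_⟩
        simp only [Finset.mem_sdiff, not_and, not_not]
        exact fun _ => this
      have := Finset.card_lt_card hlt
      omega
    have hodd := h3 e2
    have hgi : ∀ t, g t = f u ↔ t = f u ∨ t = f v ∨ t = f w := by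
      intro t; simp only [g]; split_ifs with h <;> tauto
    intro a
    by_cases ha : g (f a) = f u
    · have : Finset.univ.filter (fun b => (g ∘ f) b = (g ∘ f) a) =
        (Finset.univ.filter (fun b => f b = f u) ∪ Finset.univ.filter (fun b => f b = f v)) ∪
          Finset.univ.filter (fun b => f b = f w) := by
        ext b
        simp only [Function.comp, ha, hgi, Finset.mem_filter, Finset.mem_univ, true_and,
          Finset.mem_union]
        tauto
      rw [this, Finset.card_union_of_disjoint, Finset.card_union_of_disjoint]
      · exact (((hodd u).add_odd (hodd v)).add_odd (hodd w))
      · rw [Finset.disjoint_left]; intro b; simp only [Finset.mem_filter, Finset.mem_univ, true_and]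
        grind
      · rw [Finset.disjoint_left]; intro b
        simp only [Finset.mem_filter, Finset.mem_univ, true_and, Finset.mem_union]
        grind
    · have ha' : ¬ (f a = f u ∨ f a = f v ∨ f a = f w) := fun h => ha ((hgi _).mpr h)
      have : Finset.univ.filter (fun b => (g ∘ f) b = (g ∘ f) a) =
        Finset.univ.filter (fun b => f b = f a) := by
        ext b
        simp only [Function.comp, Finset.mem_filter, Finset.mem_univ, true_and]
        simp only [g]
        grind
      rw [this]; exact hodd a

lemma aux_list3 {N : ℕ} (l : List (Perm (Fin N))) (hl : ∀ t ∈ l, t ∈ threeCycles N) :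
    ∃ f : Fin N → Fin N, (∀ a, f (l.prod a) = f a) ∧
      N ≤ (Finset.univ.image f).card + 2 * l.length ∧
      (N = (Finset.univ.image f).card + 2 * l.length →
      ∀ a, Odd (Finset.univ.filter (fun b => f b = f a)).card) := by
  induction l with
  | nil => exact ⟨id, by simp, by simp, by simp [Finset.filter_eq']⟩
  | cons c l ih =>
    obtain ⟨f, h1, h2, h3⟩ := ih (fun t ht => hl t (List.mem_cons_of_mem _ ht))
    rw [List.prod_cons, List.length_cons]
    exact aux_step3 f _ c (hl c List.mem_cons_self) _ h1 h2 h3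

lemma aux_list2 {N : ℕ} (l : List (Perm (Fin N))) (hl : ∀ t ∈ l, t ∈ transpositions N) :
    ∃ f : Fin N → Fin N, (∀ a, f (l.prod a) = f a) ∧
      N ≤ (Finset.univ.image f).card + l.length := by
  classical
  induction l with
  | nil => exact ⟨id, by simp, by simp⟩
  | cons c l ih =>
    obtain ⟨f, h1, h2⟩ := ih (fun t ht => hl t (List.mem_cons_of_mem _ ht))
    obtain ⟨u, v, huv, rfl⟩ : c.IsSwap := hl c List.mem_cons_self
    let g : Fin N → Fin N := fun t => if t = f v then f u else t
    refine ⟨g ∘ f, ?_, ?_⟩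
    · intro a
      rw [List.prod_cons, Perm.mul_apply]
      simp only [Function.comp]
      rw [← h1 a]
      generalize l.prod a = z
      simp only [g]
      by_cases hu : z = u
      · subst hu; simp
      · by_cases hv : z = v
        · subst hv; simp
        · rw [Equiv.swap_apply_of_ne_of_ne hu hv]
    · have hsub : Finset.univ.image f \ {f v} ⊆ Finset.univ.image (g ∘ f) := by
        intro t ht
        simp only [Finset.mem_sdiff, Finset.mem_image, Finset.mem_univ, true_and,
          Finset.mem_singleton] at ht
        obtain ⟨⟨a, rfl⟩, hv⟩ := ht
        exact Finset.mem_image.mpr ⟨a, Finset.mem_univ _, by simp [g, hv]⟩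
      have hcard := Finset.card_le_card hsub
      have hsd := Finset.le_card_sdiff ({f v} : Finset (Fin N)) (Finset.univ.image f)
      simp only [Finset.card_singleton] at hsd
      rw [List.length_cons]
      omega

lemma aux_inv {N : ℕ} (x : Perm (Fin N)) (f : Fin N → Fin N) (hf : ∀ a, f (x a) = f a) :
    (Finset.univ.image f).card + x.cycleType.sum ≤ N + x.cycleType.card ∧
    ((Finset.univ.image f).card + x.cycleType.sum = N + x.cycleType.card →
      (∀ a, Odd (Finset.univ.filter (fun b => f b = f a)).card) → ∀ c ∈ x.cycleType, Odd c) := by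
  classical
  rcases isEmpty_or_nonempty (Fin N) with hE | hE
  · have : x = 1 := Subsingleton.elim _ _
    subst this
    simp
  let s : Fin N → Fin N ⊕ Perm (Fin N) := fun b => if x b = b then Sum.inl b else Sum.inr (x.cycleOf b)
  have hsame : ∀ a b, x.SameCycle a b → f a = f b := by
    intro a b h
    obtain ⟨i, -, rfl⟩ := h.exists_pow_eq'
    clear h
    induction i with
    | zero => simp
    | succ n ih => rw [pow_succ', Perm.mul_apply, hf]; exact ih
  have hs : ∀ a b, s a = s b → x.SameCycle a b := by
    intro a b h
    simp only [s] at h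
    split_ifs at h with h1 h2
    · rw [Sum.inl.inj h]
    · have := Sum.inr.inj h
      have hb : a ∈ (x.cycleOf b).support := by
        rw [← this, Perm.mem_support_cycleOf_iff]
        exact ⟨SameCycle.refl _ _, by simpa using h1⟩
      exact (Perm.mem_support_cycleOf_iff.mp hb).1.symm
  have hfac : ∃ g : Fin N ⊕ Perm (Fin N) → Fin N, ∀ a, g (s a) = f a := by
    refine ⟨fun t => f (Function.invFun s t), fun a => hsame _ _ (hs _ _ ?_)⟩
    exact Function.invFun_eq ⟨a, rfl⟩
  obtain ⟨g, hg⟩ := hfac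
  have him : Finset.univ.image f = (Finset.univ.image s).image g := by
    rw [Finset.image_image]; congr 1; ext a; simp [hg]
  have hsub : Finset.univ.image s ⊆
      (Finset.univ \ x.support).disjSum x.cycleFactorsFinset := by
    intro t ht
    obtain ⟨b, -, rfl⟩ := Finset.mem_image.mp ht
    simp only [s]
    split_ifs with h
    · simp [h]
    · simp only [Finset.inr_mem_disjSum]
      exact Perm.cycleOf_mem_cycleFactorsFinset_iff.mpr (by simpa using h)
  have hc := Finset.card_le_card hsub
  rw [Finset.card_disjSum, Finset.card_univ_sdiff, Fintype.card_fin, ] at hc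
  have hsum := x.sum_cycleType
  have hcf : x.cycleType.card = x.cycleFactorsFinset.card := by
    rw [Perm.cycleType_def]; simp
  have hle : x.support.card ≤ N := by simpa using x.support.card_le_univ
  have hgi := Finset.card_image_le (s := Finset.univ.image s) (f := g)
  rw [← him] at hgi
  refine ⟨by omega, fun heq hodd n hn => ?_⟩
  have hinj : Set.InjOn g (Finset.univ.image s : Finset _) := by
    rw [← Finset.card_image_iff, ← him]; omega
  rw [Perm.cycleType_def, Multiset.mem_map] at hn
  obtain ⟨c, hcm, rfl⟩ := hn
  have hcm' : c ∈ x.cycleFactorsFinset := hcm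
  obtain ⟨a, ha⟩ := (Perm.mem_cycleFactorsFinset_iff.mp hcm').1.nonempty_support
  have hca : c = x.cycleOf a := Perm.cycle_is_cycleOf ha hcm'
  have hxa : a ∈ x.support := Perm.mem_cycleFactorsFinset_support_le hcm' ha
  have : c.support = Finset.univ.filter (fun b => f b = f a) := by
    ext b
    simp only [Finset.mem_filter, Finset.mem_univ, true_and]
    rw [hca, Perm.mem_support_cycleOf_iff]
    constructor
    · rintro ⟨h, -⟩; exact (hsame _ _ h).symm
    · intro h
      refine ⟨?_, by assumption⟩
      apply hs
      apply hinj (by simp) (by simp)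
      rw [hg, hg, h]
  simp only [Function.comp, this]
  exact hodd a

lemma aux_form2 {N : ℕ} (l : List (Fin N)) (hl : l.Nodup) :
    ∃ L : List (Perm (Fin N)), (∀ t ∈ L, t ∈ transpositions N) ∧ L.prod = l.formPerm ∧
      L.length = l.length - 1 := by
  induction l with
  | nil => exact ⟨[], by simp⟩
  | cons a l ih =>
    cases l with
    | nil => exact ⟨[], by simp⟩
    | cons b l =>
      obtain ⟨L, h1, h2, h3⟩ := ih (List.nodup_cons.mp hl).2
      refine ⟨swap a b :: L, ?_, ?_, ?_⟩
      · simp only [List.mem_cons, forall_eq_or_imp]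
        exact ⟨⟨a, b, by grind, rfl⟩, h1⟩
      · rw [List.prod_cons, h2, List.formPerm_cons_cons]
      · simp [h3]

lemma aux_form3 {N : ℕ} (n : ℕ) : ∀ (l : List (Fin N)) (hl : l.Nodup) (hn : l.length = 2 * n + 1),
    ∃ L : List (Perm (Fin N)), (∀ t ∈ L, t ∈ threeCycles N) ∧ L.prod = l.formPerm ∧
      L.length = n := by
  induction n with
  | zero =>
    intro l hl hn
    obtain ⟨a, rfl⟩ := List.length_eq_one_iff.mp hn
    exact ⟨[], by simp⟩
  | succ n ih =>
    intro l hl hn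
    match l, hl, hn with
    | a :: b :: c :: l, hl, hn =>
      obtain ⟨L, h1, h2, h3⟩ := ih (c :: l) (by grind) (by grind)
      refine ⟨(swap a b * swap b c) :: L, ?_, ?_, ?_⟩
      · simp only [List.mem_cons, forall_eq_or_imp]
        refine ⟨?_, h1⟩
        rw [swap_comm a b]
        exact Perm.isThreeCycle_swap_mul_swap_same (by grind) (by grind) (by grind)
      · rw [List.prod_cons, h2, List.formPerm_cons_cons, List.formPerm_cons_cons, mul_assoc]
      · simp [h3]

lemma aux_cyc_list {N : ℕ} (σ : Perm (Fin N)) (h : σ.IsCycle) :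
    ∃ l : List (Fin N), l.Nodup ∧ l.formPerm = σ ∧ l.length = σ.support.card := by
  obtain ⟨a, ha⟩ := h.nonempty_support
  refine ⟨σ.toList a, Perm.nodup_toList _ _, ?_, ?_⟩
  · rw [Perm.formPerm_toList, h.cycleOf_eq (by simpa using ha)]
  · rw [Perm.length_toList, h.cycleOf_eq (by simpa using ha)]

lemma aux_up2 {N : ℕ} (x : Perm (Fin N)) :
    ∃ L : List (Perm (Fin N)), (∀ t ∈ L, t ∈ transpositions N) ∧ L.prod = x ∧
      L.length + x.cycleType.card = x.cycleType.sum := by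
  induction x using Perm.cycle_induction_on with
  | base_one => exact ⟨[], by simp⟩
  | base_cycles σ h =>
    obtain ⟨l, h1, h2, h3⟩ := aux_cyc_list σ h
    obtain ⟨L, g1, g2, g3⟩ := aux_form2 l h1
    refine ⟨L, g1, g2.trans h2, ?_⟩
    have := h.two_le_card_support
    simp only [h.cycleType, Multiset.card_singleton, Multiset.sum_singleton]
    omega
  | induction_disjoint σ τ hd hc h1 h2 =>
    obtain ⟨L, a1, a2, a3⟩ := h1
    obtain ⟨M, b1, b2, b3⟩ := h2
    refine ⟨L ++ M, by grind, by simp [a2, b2], ?_⟩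
    rw [hd.cycleType_mul]
    simp only [List.length_append, Multiset.card_add, Multiset.sum_add]
    omega

lemma aux_up3 {N : ℕ} (x : Perm (Fin N)) : (∀ c ∈ x.cycleType, Odd c) →
    ∃ L : List (Perm (Fin N)), (∀ t ∈ L, t ∈ threeCycles N) ∧ L.prod = x ∧
      2 * L.length + x.cycleType.card = x.cycleType.sum := by
  induction x using Perm.cycle_induction_on with
  | base_one => exact fun _ => ⟨[], by simp⟩
  | base_cycles σ h =>
    intro ho
    obtain ⟨l, h1, h2, h3⟩ := aux_cyc_list σ h
    obtain ⟨n, hn⟩ := ho σ.support.card (by simp [h.cycleType])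
    obtain ⟨L, g1, g2, g3⟩ := aux_form3 n l h1 (by omega)
    refine ⟨L, g1, g2.trans h2, ?_⟩
    simp only [h.cycleType, Multiset.card_singleton, Multiset.sum_singleton]
    omega
  | induction_disjoint σ τ hd hc h1 h2 =>
    intro ho
    rw [hd.cycleType_mul] at ho ⊢
    obtain ⟨L, a1, a2, a3⟩ := h1 (fun c hc => ho c (Multiset.mem_add.mpr (Or.inl hc)))
    obtain ⟨M, b1, b2, b3⟩ := h2 (fun c hc => ho c (Multiset.mem_add.mpr (Or.inr hc)))
    refine ⟨L ++ M, by grind, by simp [a2, b2], ?_⟩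
    simp only [List.length_append, Multiset.card_add, Multiset.sum_add]
    omega

lemma aux_len_le {G : Type*} [Group G] (T : Set G) (l : List G) (hl : ∀ t ∈ l, t ∈ T) :
    lenT T l.prod ≤ l.length := Nat.sInf_le ⟨l, hl, rfl, rfl⟩

lemma aux_len_mem {G : Type*} [Group G] (T : Set G) (l : List G) (hl : ∀ t ∈ l, t ∈ T) :
    ∃ l' : List G, (∀ t ∈ l', t ∈ T) ∧ l'.prod = l.prod ∧ l'.length = lenT T l.prod :=
  Nat.sInf_mem (s := {n | ∃ l' : List G, (∀ t ∈ l', t ∈ T) ∧ l'.prod = l.prod ∧ l'.length = n})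
    ⟨_, l, hl, rfl, rfl⟩

lemma aux_len2 {N : ℕ} (x : Perm (Fin N)) :
    lenT (transpositions N) x + x.cycleType.card = x.cycleType.sum := by
  obtain ⟨L, h1, h2, h3⟩ := aux_up2 x
  have hle := aux_len_le _ L h1
  obtain ⟨M, g1, g2, g3⟩ := aux_len_mem _ L h1
  obtain ⟨f, f1, f2⟩ := aux_list2 M g1
  rw [h2] at hle g2 g3
  rw [g2] at f1
  have := (aux_inv x f f1).1
  omega

lemma aux_alt {N : ℕ} (x : Perm (Fin N)) (hx : x ∈ alternatingGroup (Fin N)) :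
    ∃ L : List (Perm (Fin N)), (∀ t ∈ L, t ∈ threeCycles N) ∧ L.prod = x := by
  rw [← Perm.closure_three_cycles_eq_alternating, ← Subgroup.mem_toSubmonoid,
    Subgroup.closure_toSubmonoid] at hx
  obtain ⟨L, h1, h2⟩ := Submonoid.exists_list_of_mem_closure hx
  refine ⟨L, fun t ht => ?_, h2⟩
  rcases h1 t ht with h | h
  · exact h
  · exact Perm.IsThreeCycle.inv_iff.mp h

/-- A permutation of `Fin N` lies in `A_N^o` iff all its cycles (fixed points included,
trivially of odd length 1) are odd, i.e. all entries of its cycle type are odd. -/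
theorem stmt1 (N : ℕ) (x : Perm (Fin N)) (hx : x ∈ alternatingGroup (Fin N)) :
    (∀ c ∈ x.cycleType, Odd c) ↔
      lenT (threeCycles N) x = lenT (transpositions N) x / 2 := by
  have h2 := aux_len2 x
  obtain ⟨L, hL, rfl⟩ := aux_alt x hx
  obtain ⟨M, g1, g2, g3⟩ := aux_len_mem _ L hL
  obtain ⟨f, f1, f2, f3⟩ := aux_list3 M g1
  rw [g2] at f1
  have hi := aux_inv _ f f1
  constructor
  · intro ho
    obtain ⟨K, k1, k2, k3⟩ := aux_up3 _ ho
    have hle := aux_len_le _ K k1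
    rw [k2] at hle
    have := hi.1
    omega
  · intro he
    have := hi.1
    exact hi.2 (by omega) (f3 (by omega))
end

section
/- For N odd, N = 2n+1, and c = (1 2 ... N), a permutation x ∈ A_N satisfies x ≤_3 c if and only if x is a noncrossing partition of [N] (i.e., x ≤_2 c) all of whose cycles, written as increasing sequences (u_1 < u_2 < ... < u_q), have odd length q and satisfy that u_{j+1} - u_j is odd for all j. -/
open Equiv Equiv.Perm

open scoped Classical in
/-- The support of the cycle of `x` containing `a` (a singleton for a fixed point). -/
noncomputable def orbitF {N : ℕ} (x : Perm (Fin N)) (a : Fin N) : Finset (Fin N) :=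
  Finset.univ.filter (fun b => x.SameCycle a b)

/-- Property (OD) for a cycle written as an increasing sequence `u₁ < u₂ < ⋯ < u_q`:
`q` is odd and all consecutive differences `u_{j+1} - u_j` are odd. -/
def ODfinset {N : ℕ} (S : Finset (Fin N)) : Prop :=
  Odd S.card ∧ (S.sort (· ≤ ·)).Chain' (fun a b => Odd ((b : ℕ) - (a : ℕ)))

/-- All cycles of `x`, written as increasing sequences, satisfy property (OD). -/
def satisfiesOD {N : ℕ} (x : Perm (Fin N)) : Prop := ∀ a : Fin N, ODfinset (orbitF x a)

section helpers
variable {N : ℕ}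

theorem mem_orbitF {x : Perm (Fin N)} {a b : Fin N} : b ∈ orbitF x a ↔ x.SameCycle a b := by
  simp [orbitF]

theorem orbitF_eq {x : Perm (Fin N)} {a b : Fin N} : orbitF x a = orbitF x b ↔ x.SameCycle a b := by
  constructor
  · intro h
    have : b ∈ orbitF x b := mem_orbitF.2 (SameCycle.refl _ _)
    rw [← h] at this
    exact mem_orbitF.1 this
  · intro h
    ext u
    rw [mem_orbitF, mem_orbitF]
    exact ⟨fun h' => h.symm.trans h', fun h' => h.trans h'⟩

theorem sc_ind {x : Perm (Fin N)} (R : Fin N → Fin N → Prop) (hr : ∀ u, R u u)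
    (ht : ∀ u v, R u v → R u (x v)) {u v : Fin N} (h : x.SameCycle u v) : R u v := by
  obtain ⟨i, rfl⟩ := h.exists_nat_pow_eq
  induction i with
  | zero => exact hr u
  | succ i ih =>
    rw [pow_succ', mul_apply]
    exact ht _ _ (ih (sameCycle_pow_right.2 (SameCycle.refl _ _)))

theorem sc_step (x : Perm (Fin N)) (v : Fin N) : x.SameCycle v (x v) :=
  sameCycle_apply_right.2 (SameCycle.refl _ _)

theorem merge_aux {x : Perm (Fin N)} {a b : Fin N} (h : ¬ x.SameCycle a b) {v : Fin N}
    (hv : x.SameCycle b v) : (x * swap a b).SameCycle a v := by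
  obtain ⟨i, hi, -, rfl⟩ := hv.exists_pow_eq''
  obtain ⟨j, rfl⟩ : ∃ j, i = j + 1 := ⟨i - 1, by omega⟩
  clear hi hv
  induction j with
  | zero =>
    have := sc_step (x * swap a b) a
    simpa using this
  | succ j ih =>
    by_cases hb : (x ^ (j + 1)) b = b
    · rw [pow_succ', mul_apply, hb]
      have := sc_step (x * swap a b) a
      simpa using this
    · have ha : (x ^ (j + 1)) b ≠ a := by
        intro h'
        apply h
        rw [← h']
        exact (sameCycle_pow_right.2 (SameCycle.refl _ _)).symm
      have := ih.trans (sc_step (x * swap a b) _)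
      rw [mul_apply, swap_apply_of_ne_of_ne ha hb] at this
      rwa [pow_succ', mul_apply]

theorem merge_sc {x : Perm (Fin N)} {a b : Fin N} (h : ¬ x.SameCycle a b) {u v : Fin N} :
    (x * swap a b).SameCycle u v ↔ x.SameCycle u v ∨
      ((x.SameCycle a u ∨ x.SameCycle b u) ∧ (x.SameCycle a v ∨ x.SameCycle b v)) := by
  have hB : ∀ v, x.SameCycle b v → (x * swap a b).SameCycle a v := fun v hv => merge_aux h hv
  have hA : ∀ v, x.SameCycle a v → (x * swap a b).SameCycle b v := fun v hv => by
    rw [swap_comm]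
    exact merge_aux (fun h' => h h'.symm) hv
  have hab : (x * swap a b).SameCycle a b := hB b (SameCycle.refl _ _)
  have hP : ∀ v, (x.SameCycle a v ∨ x.SameCycle b v) → (x * swap a b).SameCycle a v := by
    rintro v (hv | hv)
    · exact hab.trans (hA v hv)
    · exact hB v hv
  constructor
  · intro hs
    refine sc_ind (x := x * swap a b) (fun u v => x.SameCycle u v ∨
      ((x.SameCycle a u ∨ x.SameCycle b u) ∧ (x.SameCycle a v ∨ x.SameCycle b v)))
      (fun u => Or.inl (SameCycle.refl _ _)) ?_ hs
    intro u v huv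
    by_cases hva : v = a
    · subst hva
      have h1 : (x * swap v b) v = x b := by simp
      rw [h1]
      right
      refine ⟨?_, Or.inr (sc_step _ _)⟩
      rcases huv with h1 | h1
      · exact Or.inl h1.symm
      · exact h1.1
    · by_cases hvb : v = b
      · subst hvb
        have h1 : (x * swap a v) v = x a := by simp
        rw [h1]
        right
        refine ⟨?_, Or.inl (sc_step _ _)⟩
        rcases huv with h1 | h1
        · exact Or.inr h1.symm
        · exact h1.1
      · rw [mul_apply, swap_apply_of_ne_of_ne hva hvb]
        simpa only [sameCycle_apply_right] using huv
  · rintro (hs | ⟨h1, h2⟩)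
    · refine sc_ind (x := x) (fun u v => (x * swap a b).SameCycle u v)
        (fun u => (SameCycle.refl _ _)) ?_ hs
      intro u v huv
      refine huv.trans ?_
      by_cases hv : x.SameCycle a v ∨ x.SameCycle b v
      · refine (hP v hv).symm.trans (hP _ ?_)
        simpa only [sameCycle_apply_right] using hv
      · have hva : v ≠ a := fun e => hv (Or.inl (e ▸ SameCycle.refl _ _))
        have hvb : v ≠ b := fun e => hv (Or.inr (e ▸ SameCycle.refl _ _))
        have := sc_step (x * swap a b) v
        rwa [mul_apply, swap_apply_of_ne_of_ne hva hvb] at this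
    · exact (hP u h1).symm.trans (hP v h2)

theorem split_sc {x : Perm (Fin N)} {a b : Fin N} (hne : a ≠ b) (h : x.SameCycle a b) :
    ¬ (x * swap a b).SameCycle a b := by
  classical
  have hex := h.exists_nat_pow_eq
  set m := Nat.find hex with hm
  have hmb : (x ^ m) a = b := Nat.find_spec hex
  have hmin : ∀ j, j < m → (x ^ j) a ≠ b := fun j hj => Nat.find_min hex hj
  have hm0 : 0 < m := by
    rcases Nat.eq_zero_or_pos m with h0 | h0
    · rw [h0] at hmb; exact absurd hmb hne
    · exact h0
  have hna : ∀ j, 1 ≤ j → j ≤ m → (x ^ j) a ≠ a := by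
    intro j h1 h2 e
    rcases Nat.lt_or_ge j m with hj | hj
    · apply hmin (m - j) (by omega)
      rw [← hmb]
      conv_rhs => rw [show m = (m - j) + j by omega, pow_add, mul_apply, e]
    · have : j = m := by omega
      subst this
      exact hne (e.symm.trans hmb)
  intro hs
  have key := sc_ind (x := x * swap a b)
    (fun u v => (∃ j, 1 ≤ j ∧ j ≤ m ∧ (x ^ j) a = u) → (∃ j, 1 ≤ j ∧ j ≤ m ∧ (x ^ j) a = v))
    (fun u h => h) (by
      intro u v h1 h2
      obtain ⟨j, hj1, hj2, rfl⟩ := h1 h2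
      rcases Nat.lt_or_ge j m with hj | hj
      · refine ⟨j + 1, by omega, by omega, ?_⟩
        rw [mul_apply, swap_apply_of_ne_of_ne (hna j hj1 hj2) (hmin j hj), pow_succ', mul_apply]
      · have : j = m := by omega
        subst this
        refine ⟨1, le_refl _, hm0, ?_⟩
        rw [hmb]
        simp) hs.symm ⟨m, hm0, le_refl _, hmb⟩
  obtain ⟨j, h1, h2, h3⟩ := key
  exact hna j h1 h2 h3

/-- number of cycles -/
noncomputable def cyc (x : Perm (Fin N)) : ℕ := (Finset.univ.image (orbitF x)).card

theorem merge_orbit_in {x : Perm (Fin N)} {a b : Fin N} (h : ¬ x.SameCycle a b) {u : Fin N}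
    (hu : x.SameCycle a u ∨ x.SameCycle b u) :
    orbitF (x * swap a b) u = orbitF x a ∪ orbitF x b := by
  ext v
  rw [mem_orbitF, merge_sc h, Finset.mem_union, mem_orbitF, mem_orbitF]
  constructor
  · rintro (h1 | h1)
    · rcases hu with hu | hu
      · exact Or.inl (hu.trans h1)
      · exact Or.inr (hu.trans h1)
    · exact h1.2
  · intro h1; exact Or.inr ⟨hu, h1⟩

theorem merge_orbit_out {x : Perm (Fin N)} {a b : Fin N} (h : ¬ x.SameCycle a b) {u : Fin N}
    (hu : ¬ (x.SameCycle a u ∨ x.SameCycle b u)) :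
    orbitF (x * swap a b) u = orbitF x u := by
  ext v
  rw [mem_orbitF, merge_sc h, mem_orbitF]
  tauto

theorem orbit_disj {x : Perm (Fin N)} {a b : Fin N} (h : ¬ x.SameCycle a b) :
    Disjoint (orbitF x a) (orbitF x b) := by
  rw [Finset.disjoint_left]
  intro v h1 h2
  rw [mem_orbitF] at h1 h2
  exact h (h1.trans h2.symm)

theorem merge_cyc {x : Perm (Fin N)} {a b : Fin N} (h : ¬ x.SameCycle a b) :
    cyc (x * swap a b) + 1 = cyc x := by
  have himg : Finset.univ.image (orbitF (x * swap a b)) =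
      insert (orbitF x a ∪ orbitF x b)
        (((Finset.univ.image (orbitF x)).erase (orbitF x a)).erase (orbitF x b)) := by
    ext S
    simp only [Finset.mem_image, Finset.mem_univ, true_and, Finset.mem_insert, Finset.mem_erase]
    constructor
    · rintro ⟨u, rfl⟩
      by_cases hu : x.SameCycle a u ∨ x.SameCycle b u
      · exact Or.inl (merge_orbit_in h hu)
      · right
        rw [merge_orbit_out h hu]
        refine ⟨fun e => hu (Or.inr (orbitF_eq.1 e).symm), fun e => hu (Or.inl (orbitF_eq.1 e).symm), u, rfl⟩
    · rintro (rfl | ⟨h1, h2, u, rfl⟩)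
      · exact ⟨a, merge_orbit_in h (Or.inl (SameCycle.refl _ _))⟩
      · refine ⟨u, merge_orbit_out h ?_⟩
        rintro (hu | hu)
        · exact h2 (orbitF_eq.2 hu.symm)
        · exact h1 (orbitF_eq.2 hu.symm)
  have hA : orbitF x a ∈ Finset.univ.image (orbitF x) := Finset.mem_image_of_mem _ (Finset.mem_univ _)
  have hB : orbitF x b ∈ (Finset.univ.image (orbitF x)).erase (orbitF x a) :=
    Finset.mem_erase.2 ⟨fun e => h (orbitF_eq.1 e).symm, Finset.mem_image_of_mem _ (Finset.mem_univ _)⟩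
  unfold cyc
  rw [himg, Finset.card_insert_of_notMem, Finset.card_erase_of_mem hB, Finset.card_erase_of_mem hA]
  · have h1 := Finset.card_pos.2 ⟨_, hB⟩
    rw [Finset.card_erase_of_mem hA] at h1
    omega
  · intro hm
    simp only [Finset.mem_image, Finset.mem_univ, true_and, Finset.mem_erase] at hm
    obtain ⟨h1, h2, u, hu⟩ := hm
    apply h2
    rw [← hu]
    apply orbitF_eq.2
    rw [← mem_orbitF, hu, Finset.mem_union]
    exact Or.inl (mem_orbitF.2 (SameCycle.refl _ _))

theorem split_cyc {x : Perm (Fin N)} {a b : Fin N} (hne : a ≠ b) (h : x.SameCycle a b) :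
    cyc (x * swap a b) = cyc x + 1 := by
  have := merge_cyc (split_sc hne h)
  rw [mul_assoc, swap_mul_self, mul_one] at this
  omega

theorem swap_cyc {x : Perm (Fin N)} {a b : Fin N} (hne : a ≠ b) :
    cyc x ≤ cyc (x * swap a b) + 1 := by
  by_cases h : x.SameCycle a b
  · rw [split_cyc hne h]; omega
  · rw [merge_cyc h]

theorem cyc_one : cyc (1 : Perm (Fin N)) = N := by
  unfold cyc
  rw [Finset.card_image_of_injective]
  · simp
  · intro a b h
    rw [orbitF_eq] at h
    simpa using h

theorem cyc_swaps (l : List (Perm (Fin N))) (hl : ∀ t ∈ l, t ∈ transpositions N) :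
    N ≤ cyc l.prod + l.length := by
  induction l using List.reverseRecOn with
  | nil => simp [cyc_one]
  | append_singleton l t ih =>
    have h1 := ih (fun s hs => hl s (by simp [hs]))
    obtain ⟨a, b, hab, rfl⟩ : t.IsSwap := hl t (by simp)
    have := swap_cyc (x := l.prod) hab
    simp only [List.prod_append, List.prod_singleton, List.length_append, List.length_singleton]
    omega

theorem three_rep {t : Perm (Fin N)} (ht : t.IsThreeCycle) :
    ∃ p q r, p ≠ q ∧ p ≠ r ∧ q ≠ r ∧ t = swap p q * swap p r := by
  have h1 := ht.card_support
  obtain ⟨a, ha⟩ : t.support.Nonempty := by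
    rw [← Finset.card_pos]; omega
  have h2 := (ht.eq_swap_mul_swap_iff_mem_support (a := a)).2 ha
  have h3 := (ht.nodup_iff_mem_support (a := a)).2 ha
  have n1 : a ≠ t a := by grind
  have n2 : a ≠ t (t a) := by grind
  have n3 : t a ≠ t (t a) := by grind
  refine ⟨a, t (t a), t a, n2, n1, n3.symm, ?_⟩
  conv_lhs => rw [h2]
  ext u
  simp only [mul_apply, swap_apply_def]
  congr 1
  grind

theorem three_alt1 {p q r : Fin N} (h1 : p ≠ q) (h2 : p ≠ r) (h3 : q ≠ r) :
    swap p q * swap p r = swap p r * swap r q := by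
  ext u
  simp only [mul_apply, swap_apply_def]
  congr 1
  grind

theorem three_alt2 {p q r : Fin N} (h1 : p ≠ q) (h2 : p ≠ r) (h3 : q ≠ r) :
    swap p q * swap p r = swap q r * swap q p := by
  ext u
  simp only [mul_apply, swap_apply_def]
  congr 1
  grind

theorem three_cyc {x : Perm (Fin N)} {p q r : Fin N} (h1 : p ≠ q) (h2 : p ≠ r) (h3 : q ≠ r) :
    cyc x ≤ cyc (x * (swap p q * swap p r)) + 2 := by
  have e1 := swap_cyc (x := x) h1
  have e2 := swap_cyc (x := x * swap p q) h2
  rw [mul_assoc] at e2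
  omega

theorem three_drop {x : Perm (Fin N)} {p q r : Fin N} (h1 : p ≠ q) (h2 : p ≠ r) (h3 : q ≠ r)
    (h : cyc (x * (swap p q * swap p r)) + 2 ≤ cyc x) :
    ¬ x.SameCycle p q ∧ ¬ x.SameCycle p r ∧ ¬ x.SameCycle q r := by
  refine ⟨fun hs => ?_, fun hs => ?_, fun hs => ?_⟩
  · have e1 := split_cyc h1 hs
    have e2 := swap_cyc (x := x * swap p q) h2
    rw [mul_assoc] at e2
    omega
  · rw [three_alt1 h1 h2 h3] at h
    have e1 := split_cyc h2 hs
    have e2 := swap_cyc (x := x * swap p r) h3.symm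
    rw [mul_assoc] at e2
    omega
  · rw [three_alt2 h1 h2 h3] at h
    have e1 := split_cyc h3 hs
    have e2 := swap_cyc (x := x * swap q r) h1.symm
    rw [mul_assoc] at e2
    omega

theorem cyc_threes (l : List (Perm (Fin N))) (hl : ∀ t ∈ l, t ∈ threeCycles N) :
    N ≤ cyc l.prod + 2 * l.length := by
  induction l using List.reverseRecOn with
  | nil => simp [cyc_one]
  | append_singleton l t ih =>
    have h1 := ih (fun s hs => hl s (by simp [hs]))
    obtain ⟨p, q, r, hpq, hpr, hqr, rfl⟩ := three_rep (hl t (by simp))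
    have := three_cyc (x := l.prod) hpq hpr hqr
    simp only [List.prod_append, List.prod_singleton, List.length_append, List.length_singleton]
    omega

/-- all cycles odd -/
def AllOdd (x : Perm (Fin N)) : Prop := ∀ u, Odd (orbitF x u).card

theorem merge_card {x : Perm (Fin N)} {a b : Fin N} (h : ¬ x.SameCycle a b) {u : Fin N}
    (hu : x.SameCycle a u ∨ x.SameCycle b u) :
    (orbitF (x * swap a b) u).card = (orbitF x a).card + (orbitF x b).card := by
  rw [merge_orbit_in h hu, Finset.card_union_of_disjoint (orbit_disj h)]

/-- sizes of cycles after merging three cycles -/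
theorem merge3 {x : Perm (Fin N)} {p q r : Fin N}
    (h1 : ¬ x.SameCycle p q) (h2 : ¬ x.SameCycle p r) (h3 : ¬ x.SameCycle q r) (u : Fin N) :
    ((x.SameCycle p u ∨ x.SameCycle q u ∨ x.SameCycle r u) ∧
      (orbitF (x * (swap p q * swap p r)) u).card =
        (orbitF x p).card + (orbitF x q).card + (orbitF x r).card) ∨
    (¬ (x.SameCycle p u ∨ x.SameCycle q u ∨ x.SameCycle r u) ∧
      orbitF (x * (swap p q * swap p r)) u = orbitF x u) := by
  have h4 : ¬ (x * swap p q).SameCycle p r := by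
    rw [merge_sc h1]; tauto
  have hr : ¬ (x.SameCycle p r ∨ x.SameCycle q r) := by tauto
  have e1 : (orbitF (x * swap p q) p).card = _ := merge_card h1 (Or.inl (SameCycle.refl _ _))
  have e2 := merge_orbit_out h1 hr
  rw [← mul_assoc]
  have hp : x.SameCycle p p := SameCycle.refl _ _
  have i1 : (x * swap p q).SameCycle p u ↔ (x.SameCycle p u ∨ x.SameCycle q u) := by
    rw [merge_sc h1]; tauto
  have i2 : (x * swap p q).SameCycle r u ↔ x.SameCycle r u := by
    rw [merge_sc h1]; tauto
  by_cases hu : x.SameCycle p u ∨ x.SameCycle q u ∨ x.SameCycle r u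
  · left
    refine ⟨hu, ?_⟩
    rw [merge_card h4 (by rw [i1, i2]; tauto), e1, e2]
  · right
    refine ⟨hu, ?_⟩
    rw [merge_orbit_out h4 (by rw [i1, i2]; tauto), merge_orbit_out h1 (by tauto)]

theorem allOdd_one : AllOdd (1 : Perm (Fin N)) := by
  intro u
  have : orbitF (1 : Perm (Fin N)) u = {u} := by
    ext v; rw [mem_orbitF]; simp [eq_comm]
  rw [this]; simp

theorem allOdd_threes (l : List (Perm (Fin N))) (hl : ∀ t ∈ l, t ∈ threeCycles N)
    (hc : cyc l.prod + 2 * l.length ≤ N) : AllOdd l.prod := by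
  induction l using List.reverseRecOn with
  | nil => simpa using allOdd_one
  | append_singleton l t ih =>
    have hl' : ∀ s ∈ l, s ∈ threeCycles N := fun s hs => hl s (by simp [hs])
    have hb := cyc_threes l hl'
    obtain ⟨p, q, r, hpq, hpr, hqr, rfl⟩ := three_rep (hl t (by simp))
    have h3 := three_cyc (x := l.prod) hpq hpr hqr
    simp only [List.prod_append, List.prod_singleton, List.length_append, List.length_singleton] at hc ⊢
    have ho := ih hl' (by omega)
    obtain ⟨d1, d2, d3⟩ := three_drop hpq hpr hqr (x := l.prod) (by omega)
    intro u
    rcases merge3 d1 d2 d3 u with ⟨-, h⟩ | ⟨-, h⟩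
    · rw [h]
      exact ((ho p).add_odd (ho q)).add_odd (ho r)
    · rw [h]; exact ho u

theorem threes_of_allOdd (x : Perm (Fin N)) (hx : AllOdd x) :
    ∃ l : List (Perm (Fin N)), (∀ t ∈ l, t ∈ threeCycles N) ∧ l.prod = x ∧
      2 * l.length + cyc x = N := by
  obtain ⟨m, hm⟩ : ∃ m, m = N - cyc x := ⟨_, rfl⟩
  have hle : ∀ y : Perm (Fin N), cyc y ≤ N := fun y => by
    unfold cyc
    exact Finset.card_image_le.trans (by simp)
  induction m using Nat.strong_induction_on generalizing x with
  | _ m ih =>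
    by_cases h1 : x = 1
    · subst h1
      exact ⟨[], by simp, by simp, by simp [cyc_one]⟩
    · obtain ⟨a, ha⟩ : ∃ a, x a ≠ a := by
        by_contra hcon
        push Not at hcon
        exact h1 (Equiv.ext hcon)
      set b := x a with hb
      set e := x⁻¹ a with he
      have hxe : x e = a := by simp [he]
      have hea : e ≠ a := by
        intro h'; rw [h'] at hxe; exact ha hxe
      have hxb : x b ≠ a := by
        intro h'
        have h2 : orbitF x a = {a, b} := by
          ext v
          rw [mem_orbitF]
          constructor
          · intro hs
            refine sc_ind (x := x) (fun u v => u ∈ ({a, b} : Finset (Fin N)) → v ∈ ({a, b} : Finset (Fin N))) (fun u h => h) ?_ hs (by simp)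
            intro u v h3 h4
            have h5 := h3 h4
            simp only [Finset.mem_insert, Finset.mem_singleton] at h5 ⊢
            rcases h5 with rfl | rfl
            · right; rfl
            · left; exact h'
          · intro hv
            simp only [Finset.mem_insert, Finset.mem_singleton] at hv
            rcases hv with rfl | rfl
            · exact SameCycle.refl _ _
            · exact sc_step _ _
        have h3 := hx a
        rw [h2, Finset.card_pair ha.symm] at h3
        exact absurd h3 (by decide)
      have heb : e ≠ b := by
        intro h'; rw [h'] at hxe; exact hxb hxe
      have hab : a ≠ b := ha.symm
      set x1 := x * swap a b with hx1
      set x2 := x1 * swap a e with hx2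
      have c1 : cyc x1 = cyc x + 1 := split_cyc hab (sc_step _ _)
      have hx1e : x1 e = a := by
        rw [hx1, mul_apply, swap_apply_of_ne_of_ne hea heb, hxe]
      have c2 : cyc x2 = cyc x1 + 1 := by
        apply split_cyc hea.symm
        have := sc_step x1 e
        rw [hx1e] at this
        exact this.symm
      have hxx : x = x2 * (swap a e * swap a b) := by
        rw [hx2, hx1]
        simp [mul_assoc]
      have d := three_drop (x := x2) hea.symm hab heb (by rw [← hxx]; omega)
      obtain ⟨d1, d2, d3⟩ := d
      have fa : x2 a = a := by
        rw [hx2, mul_apply, swap_apply_left, hx1e]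
      have fb : x2 b = b := by
        rw [hx2, mul_apply, swap_apply_of_ne_of_ne hab.symm heb.symm, hx1, mul_apply, swap_apply_right]
      have fix : ∀ w, x2 w = w → (orbitF x2 w).card = 1 := by
        intro w hw
        have : orbitF x2 w = {w} := by
          ext v
          rw [mem_orbitF, Finset.mem_singleton]
          constructor
          · intro hs
            exact (hs.eq_of_left hw).symm
          · rintro rfl; exact SameCycle.refl _ _
        rw [this]; simp
      have ho2 : AllOdd x2 := by
        intro u
        rcases merge3 d1 d2 d3 u with ⟨h, hc⟩ | ⟨-, hc⟩
        · rw [← hxx, fix a fa, fix b fb] at hc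
          have h7 := hx u
          rw [hc] at h7
          have h8 : Odd (orbitF x2 e).card := by
            rw [Nat.odd_iff] at h7 ⊢; omega
          rcases h with h | h | h
          · rw [← orbitF_eq.2 h, fix a fa]; decide
          · rw [← orbitF_eq.2 h]; exact h8
          · rw [← orbitF_eq.2 h, fix b fb]; decide
        · rw [← hc, ← hxx]; exact hx u
      have := hle x2
      obtain ⟨l, hl, hp, hlen⟩ := ih (N - cyc x2) (by omega) x2 ho2 rfl
      refine ⟨l ++ [swap a e * swap a b], ?_, ?_, ?_⟩
      · intro t ht
        rw [List.mem_append, List.mem_singleton] at ht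
        rcases ht with ht | rfl
        · exact hl t ht
        · exact isThreeCycle_swap_mul_swap_same hea.symm hab heb
      · rw [List.prod_append, List.prod_singleton, hp, ← hxx]
      · rw [List.length_append, List.length_singleton]
        omega

def DescOnce (x : Perm (Fin N)) : Prop :=
  ∀ u v, x.SameCycle u v → x u ≤ u → x v ≤ v → u = v

def descs (x : Perm (Fin N)) : Finset (Fin N) := Finset.univ.filter (fun u => x u ≤ u)

theorem exists_desc (x : Perm (Fin N)) (u : Fin N) : ∃ v, x.SameCycle u v ∧ x v ≤ v ∧
    ∀ w, x.SameCycle u w → w ≤ v := by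
  obtain ⟨v, hv, hmax⟩ := (orbitF x u).exists_max_image id ⟨u, mem_orbitF.2 (SameCycle.refl _ _)⟩
  rw [mem_orbitF] at hv
  refine ⟨v, hv, hmax (x v) (mem_orbitF.2 (sameCycle_apply_right.2 hv)), fun w hw => ?_⟩
  exact hmax w (mem_orbitF.2 hw)

theorem image_descs (x : Perm (Fin N)) :
    (descs x).image (orbitF x) = Finset.univ.image (orbitF x) := by
  ext S
  simp only [Finset.mem_image, Finset.mem_univ, true_and, descs, Finset.mem_filter]
  constructor
  · rintro ⟨u, -, h⟩; exact ⟨u, h⟩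
  · rintro ⟨u, rfl⟩
    obtain ⟨v, h1, h2, -⟩ := exists_desc x u
    exact ⟨v, h2, orbitF_eq.2 h1.symm⟩

theorem cyc_le_descs (x : Perm (Fin N)) : cyc x ≤ (descs x).card := by
  unfold cyc
  rw [← image_descs]
  exact Finset.card_image_le

theorem descOnce_of_le {x : Perm (Fin N)} (h : (descs x).card ≤ cyc x) : DescOnce x := by
  have h1 : ((descs x).image (orbitF x)).card = (descs x).card := by
    apply le_antisymm Finset.card_image_le
    rw [image_descs]; exact h
  rw [Finset.card_image_iff] at h1
  intro u v huv hu hv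
  exact h1 (by simp [descs, hu]) (by simp [descs, hv]) (orbitF_eq.2 huv)

theorem descs_add {m : ℕ} {x y : Perm (Fin (m + 1))} (h : x * y = finRotate (m + 1)) :
    (descs x).card + (descs y).card = m + 2 := by
  unfold descs
  rw [Finset.card_filter, Finset.card_filter,
    ← Equiv.sum_comp y (fun u => if x u ≤ u then 1 else 0), ← Finset.sum_add_distrib]
  have : ∀ i : Fin (m + 1), ((if x (y i) ≤ y i then 1 else 0) + (if y i ≤ i then 1 else 0)) =
      1 + (if i = Fin.last m then 1 else 0) := by
    intro i
    have e : x (y i) = finRotate (m + 1) i := by rw [← h]; rfl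
    rw [e]
    simp only [Fin.le_def, coe_finRotate]
    have := (y i).is_le
    by_cases hi : i = Fin.last m
    · subst hi
      simp [this]
    · simp only [hi, if_false]
      split_ifs <;> omega
  rw [Finset.sum_congr rfl (fun i _ => this i), Finset.sum_add_distrib]
  simp

/-- cyclic step length -/
def kk (x : Perm (Fin N)) (u : Fin N) : ℤ := (x u : ℤ) - u + if x u ≤ u then (N : ℤ) else 0

theorem kk_sum {x : Perm (Fin N)} (hW : DescOnce x) (u : Fin N) :
    ∑ v ∈ orbitF x u, kk x v = N := by
  unfold kk
  rw [Finset.sum_add_distrib, Finset.sum_sub_distrib]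
  have h1 : ∑ v ∈ orbitF x u, ((x v : ℕ) : ℤ) = ∑ v ∈ orbitF x u, ((v : ℕ) : ℤ) := by
    refine Finset.sum_bij (fun v _ => x v) ?_ ?_ ?_ ?_
    · intro v hv
      rw [mem_orbitF] at hv ⊢
      exact sameCycle_apply_right.2 hv
    · intro a _ b _ h; exact x.injective h
    · intro b hb
      refine ⟨x.symm b, ?_, by simp⟩
      rw [mem_orbitF] at hb ⊢
      exact sameCycle_symm_apply_right.2 hb
    · intros; rfl
  rw [h1, sub_self, zero_add]
  obtain ⟨v, hv1, hv2, -⟩ := exists_desc x u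
  rw [Finset.sum_eq_single_of_mem v (mem_orbitF.2 hv1)]
  · rw [if_pos hv2]
  · intro w hw hne
    rw [if_neg]
    intro hwd
    exact hne (hW w v ((mem_orbitF.1 hw).symm.trans hv1) hwd hv2)

theorem sum_parity (S : Finset (Fin N)) (f : Fin N → ℤ) (h : ∀ v ∈ S, Odd (f v)) :
    Even (∑ v ∈ S, f v - S.card) := by
  induction S using Finset.induction_on with
  | empty => simp
  | insert a S ha ih =>
    rw [Finset.sum_insert ha, Finset.card_insert_of_notMem ha]
    have h1 := ih (fun v hv => h v (Finset.mem_insert_of_mem hv))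
    have h2 := h a (Finset.mem_insert_self _ _)
    push_cast
    rw [Int.even_iff] at h1 ⊢
    rw [Int.odd_iff] at h2
    omega

theorem fill {x : Perm (Fin N)} (hN : Odd N) (hW : DescOnce x) (u : Fin N)
    (hodd : Odd (orbitF x u).card) (h : ∀ v, x.SameCycle u v → v ≠ u → Odd (kk x v)) :
    Odd (kk x u) := by
  have hu : u ∈ orbitF x u := mem_orbitF.2 (SameCycle.refl _ _)
  have h1 := kk_sum hW u
  rw [← Finset.add_sum_erase _ _ hu] at h1
  have h2 := sum_parity ((orbitF x u).erase u) (kk x) (fun v hv => by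
    rw [Finset.mem_erase, mem_orbitF] at hv
    exact h v hv.2 hv.1)
  have h3 := Finset.card_erase_add_one hu
  rw [Int.even_iff] at h2
  rw [Int.odd_iff]
  rw [Nat.odd_iff] at hN hodd
  omega

theorem allOdd_of_kk {x : Perm (Fin N)} (hN : Odd N) (hW : DescOnce x)
    (h : ∀ v, Odd (kk x v)) : AllOdd x := by
  intro u
  have h1 := kk_sum hW u
  have h2 := sum_parity (orbitF x u) (kk x) (fun v _ => h v)
  rw [Int.even_iff] at h2
  rw [Nat.odd_iff] at hN ⊢
  omega

theorem kk_compl {m : ℕ} {x y : Perm (Fin (m + 1))} (h : x * y = finRotate (m + 1))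
    (i : Fin (m + 1)) : kk x (y i) + kk y i = m + 2 := by
  have e : x (y i) = finRotate (m + 1) i := by rw [← h]; rfl
  unfold kk
  rw [e]
  simp only [Fin.le_def, coe_finRotate]
  have := (y i).is_le
  by_cases hi : i = Fin.last m
  · subst hi
    simp [this]
    omega
  · simp only [hi, if_false]
    split_ifs <;> push_cast <;> omega

/-- no element of the cycle lies strictly between `a` and `x a`. -/
theorem no_between {x : Perm (Fin N)} (hW : DescOnce x) {a s : Fin N} (hs : x.SameCycle a s)
    (h1 : a < s) (h2 : s < x a) : False := by
  obtain ⟨M, hM1, hM2, hM3⟩ := exists_desc x a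
  have hasc : ∀ i, x.SameCycle a i → i ≠ M → i < x i := by
    intro i hi hne
    by_contra hcon
    exact hne (hW i M (hi.symm.trans hM1) (not_lt.1 hcon) hM2)
  have hxaM := hM3 (x a) (sc_step x a)
  have hsM : s ≠ M := by rintro rfl; exact absurd (lt_of_lt_of_le h2 hxaM) (lt_irrefl _)
  have hsx := hasc s hs hsM
  let L := (orbitF x a).filter (fun u => u ≤ s)
  have haL : a ∈ L := Finset.mem_filter.2 ⟨mem_orbitF.2 (SameCycle.refl _ _), h1.le⟩
  have hsL : s ∈ L.erase a := Finset.mem_erase.2 ⟨h1.ne', Finset.mem_filter.2 ⟨mem_orbitF.2 hs, le_refl _⟩⟩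
  have hsub : L.image x.symm ⊆ insert M ((L.erase a).erase s) := by
    intro w hw
    obtain ⟨v, hv, rfl⟩ := Finset.mem_image.1 hw
    have hv' := Finset.mem_filter.1 hv
    have hw1 : x.SameCycle a (x.symm v) := sameCycle_symm_apply_right.2 (mem_orbitF.1 hv'.1)
    have hxw : x (x.symm v) = v := by simp
    rw [Finset.mem_insert]
    by_cases hwM : x.symm v = M
    · exact Or.inl hwM
    · right
      have h3 := hasc _ hw1 hwM
      rw [hxw] at h3
      refine Finset.mem_erase.2 ⟨?_, Finset.mem_erase.2 ⟨?_, Finset.mem_filter.2 ⟨mem_orbitF.2 hw1, ?_⟩⟩⟩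
      · intro e
        rw [e] at hxw
        rw [hxw] at hsx
        exact absurd hsx (not_lt.2 hv'.2)
      · intro e
        rw [e] at hxw
        rw [hxw] at h2
        exact absurd h2 (not_lt.2 hv'.2)
      · exact (h3.le.trans hv'.2)
  have hc := Finset.card_le_card hsub
  rw [Finset.card_image_of_injective _ x.symm.injective] at hc
  have hc2 := Finset.card_insert_le M ((L.erase a).erase s)
  have hc3 := Finset.card_erase_add_one hsL
  have hc4 := Finset.card_erase_add_one haL
  omega

theorem od_iff (S : Finset (Fin N)) : ODfinset S ↔ Odd S.card ∧
    List.IsChain (fun a b : Fin N => Odd ((b : ℕ) - (a : ℕ))) (S.sort (· ≤ ·)) := by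
  unfold ODfinset
  have e : (S.sort (· ≤ ·) >>= fun a => pure (a : ℕ)) = (S.sort (· ≤ ·)).map (fun a : Fin N => (a : ℕ)) := by
    rw [List.bind_eq_flatMap]
    exact List.flatMap_pure_eq_map _ _
  rw [e]
  refine and_congr Iff.rfl ?_
  exact List.isChain_map _

theorem od_of_kk {x : Perm (Fin N)} (hW : DescOnce x) (ho : AllOdd x)
    (h : ∀ v, Odd (kk x v)) : satisfiesOD x := by
  intro u
  refine (od_iff _).2 ⟨ho u, ?_⟩
  have hch : List.IsChain (fun a b : Fin N => Odd ((b : ℕ) - (a : ℕ))) ((orbitF x u).sort (· ≤ ·)) := by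
    rw [List.isChain_iff_getElem]
    intro i hi
    have hs := (orbitF x u).sortedLT_sort
    have hm : ∀ j (hj : j < ((orbitF x u).sort (· ≤ ·)).length),
        x.SameCycle u ((orbitF x u).sort (· ≤ ·))[j] := fun j hj => by
      rw [← mem_orbitF, ← Finset.mem_sort (· ≤ ·)]
      exact List.getElem_mem hj
    set l := (orbitF x u).sort (· ≤ ·) with hl
    have hsm := hs.strictMono_get
    have hab : l[i] < l[i + 1] := hsm (a := ⟨i, by omega⟩) (b := ⟨i + 1, hi⟩) (by simp [Fin.lt_def])
    have ha := hm i (by omega)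
    have hb := hm (i + 1) hi
    obtain ⟨M, hM1, hM2, hM3⟩ := exists_desc x u
    have haM : l[i] ≠ M := fun e => absurd (hM3 _ hb) (not_le.2 (e ▸ hab))
    have hlt : l[i] < x l[i] := by
      by_contra hcon
      exact haM (hW _ _ (ha.symm.trans hM1) (not_lt.1 hcon) hM2)
    have hxa : x l[i] ∈ l := by
      refine (Finset.mem_sort (· ≤ ·)).2 ?_
      rw [mem_orbitF]
      exact sameCycle_apply_right.2 ha
    obtain ⟨j, hj, hje⟩ := List.getElem_of_mem hxa
    have hnb := fun h2 => no_between hW (ha.symm.trans hb) hab h2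
    have hle : l[j] ≤ l[i + 1] := by rw [hje]; exact not_lt.1 hnb
    have hij : i < j := by
      rw [← hje] at hlt
      have := (hsm.lt_iff_lt (a := ⟨i, by omega⟩) (b := ⟨j, hj⟩)).1 hlt
      simpa [Fin.lt_def] using this
    have hji : j ≤ i + 1 := by
      have := (hsm.le_iff_le (a := ⟨j, hj⟩) (b := ⟨i + 1, hi⟩)).1 hle
      simpa [Fin.le_def] using this
    have hjj : j = i + 1 := by omega
    subst hjj
    have hk := h l[i]
    unfold kk at hk
    rw [if_neg (not_le.2 hlt), ← hje] at hk
    rw [Fin.lt_def] at hab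
    rw [Int.odd_iff] at hk
    show Odd ((l[i + 1] : ℕ) - (l[i] : ℕ))
    rw [Nat.odd_iff]
    omega
  exact hch

theorem kk_of_od {x : Perm (Fin N)} (hN : Odd N) (hW : DescOnce x) (hod : satisfiesOD x) :
    ∀ v, Odd (kk x v) := by
  have hasc : ∀ v, v < x v → Odd (kk x v) := by
    intro v hv
    have hch := ((od_iff _).1 (hod v)).2
    rw [List.isChain_iff_getElem] at hch
    have hs := (orbitF x v).sortedLT_sort
    have hm : ∀ j (hj : j < ((orbitF x v).sort (· ≤ ·)).length),
        x.SameCycle v ((orbitF x v).sort (· ≤ ·))[j] := fun j hj => by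
      rw [← mem_orbitF, ← Finset.mem_sort (· ≤ ·)]
      exact List.getElem_mem hj
    have h1 : v ∈ (orbitF x v).sort (· ≤ ·) := by
      rw [Finset.mem_sort, mem_orbitF]
    have h2 : x v ∈ (orbitF x v).sort (· ≤ ·) := by
      rw [Finset.mem_sort, mem_orbitF]; exact sc_step x v
    set l := (orbitF x v).sort (· ≤ ·) with hl
    have hsm := hs.strictMono_get
    obtain ⟨i, hi, hie⟩ := List.getElem_of_mem h1
    obtain ⟨j, hj, hje⟩ := List.getElem_of_mem h2
    have hij : i < j := by
      have h3 : l[i] < l[j] := by rw [hie, hje]; exact hv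
      have := (hsm.lt_iff_lt (a := ⟨i, hi⟩) (b := ⟨j, hj⟩)).1 h3
      simpa [Fin.lt_def] using this
    have hjj : j = i + 1 := by
      by_contra hne
      have hi1 : i + 1 < l.length := by omega
      have a1 : l[i] < l[i + 1] := hsm (a := ⟨i, by omega⟩) (b := ⟨i + 1, hi1⟩) (by simp [Fin.lt_def])
      have a2 : l[i + 1] < l[j] := hsm (a := ⟨i + 1, hi1⟩) (b := ⟨j, hj⟩) (by simp only [Fin.lt_def]; omega)
      rw [hie] at a1
      rw [hje] at a2
      exact no_between hW (hm _ hi1) a1 a2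
    subst hjj
    have hk := hch i hj
    rw [hie, hje] at hk
    unfold kk
    rw [if_neg (not_le.2 hv)]
    rw [Fin.lt_def] at hv
    rw [Nat.odd_iff] at hk
    rw [Int.odd_iff]
    omega
  intro v
  by_cases hv : v < x v
  · exact hasc v hv
  · refine fill hN hW v (hod v).1 ?_
    intro w hw hne
    apply hasc
    by_contra hcon
    exact hne (hW w v hw.symm (not_lt.1 hcon) (not_lt.1 hv))

theorem down {m : ℕ} (hN : Odd (m + 1)) (l2 l1 : List (Perm (Fin (m + 1))))
    (h1 : ∀ t ∈ l1, t ∈ threeCycles (m + 1)) (h2 : ∀ t ∈ l2, t ∈ threeCycles (m + 1))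
    (hp : l1.prod * l2.prod = finRotate (m + 1)) (hlen : 2 * (l1.length + l2.length) = m) :
    DescOnce l1.prod ∧ AllOdd l1.prod ∧ cyc l1.prod + 2 * l1.length = m + 1 ∧
      ∀ v, Odd (kk l1.prod v) := by
  have c1 := cyc_threes l1 h1
  have c2 := cyc_threes l2 h2
  have d1 := cyc_le_descs l1.prod
  have d2 := cyc_le_descs l2.prod
  have d := descs_add hp
  have hW : DescOnce l1.prod := descOnce_of_le (by omega)
  have hcyc : cyc l1.prod + 2 * l1.length = m + 1 := by omega
  have ho : AllOdd l1.prod := allOdd_threes l1 h1 (by omega)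
  refine ⟨hW, ho, hcyc, ?_⟩
  clear c1 c2 d1 d2 d
  induction l2 generalizing l1 with
  | nil =>
    intro v
    simp only [List.prod_nil, mul_one] at hp
    rw [hp]
    unfold kk
    simp only [Fin.le_def, coe_finRotate]
    by_cases hi : v = Fin.last m
    · subst hi
      simp
    · simp [hi]
  | cons t l2 ih =>
    have ht := h2 t (by simp)
    have h1' : ∀ s ∈ l1 ++ [t], s ∈ threeCycles (m + 1) := by
      intro s hs
      rw [List.mem_append, List.mem_singleton] at hs
      rcases hs with hs | rfl
      · exact h1 s hs
      · exact ht
    have h2' : ∀ s ∈ l2, s ∈ threeCycles (m + 1) := fun s hs => h2 s (by simp [hs])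
    have hp' : (l1 ++ [t]).prod * l2.prod = finRotate (m + 1) := by
      rw [← hp]; simp [mul_assoc]
    have hlen' : 2 * ((l1 ++ [t]).length + l2.length) = m := by
      simp only [List.length_append, List.length_nil, List.length_cons] at hlen ⊢
      omega
    have c1 := cyc_threes _ h1'
    have c2 := cyc_threes l2 h2'
    have d1 := cyc_le_descs (l1 ++ [t]).prod
    have d2 := cyc_le_descs l2.prod
    have d := descs_add hp'
    have hcyc' : cyc (l1 ++ [t]).prod + 2 * (l1 ++ [t]).length = m + 1 := by omega
    have hk := ih (l1 ++ [t]) h1' h2' hp' hlen' (descOnce_of_le (by omega)) hcyc'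
      (allOdd_threes _ h1' (by omega))
    obtain ⟨p, q, r, hpq, hpr, hqr, rfl⟩ := three_rep ht
    simp only [List.prod_append, List.prod_singleton, List.length_append, List.length_singleton] at hcyc' hk
    obtain ⟨n1, n2, n3⟩ := three_drop hpq hpr hqr (x := l1.prod) (by omega)
    have hgen : ∀ v, v ≠ p → v ≠ q → v ≠ r → Odd (kk l1.prod v) := by
      intro v e1 e2 e3
      have := hk v
      unfold kk at this ⊢
      rwa [mul_apply, mul_apply, swap_apply_of_ne_of_ne e1 e3, swap_apply_of_ne_of_ne e1 e2] at this
    intro v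
    by_cases hv : v = p ∨ v = q ∨ v = r
    · refine fill hN hW v (ho v) ?_
      intro w hw hne
      refine hgen w ?_ ?_ ?_
      · rintro rfl
        rcases hv with rfl | rfl | rfl
        · exact hne rfl
        · exact n1 hw.symm
        · exact n2 hw.symm
      · rintro rfl
        rcases hv with rfl | rfl | rfl
        · exact n1 hw
        · exact hne rfl
        · exact n3 hw.symm
      · rintro rfl
        rcases hv with rfl | rfl | rfl
        · exact n2 hw
        · exact n3 hw
        · exact hne rfl
    · exact hgen v (by tauto) (by tauto) (by tauto)

end helpers

section lens
variable {G : Type*} [Group G]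

theorem lenT_le {T : Set G} (l : List G) (hl : ∀ t ∈ l, t ∈ T) : lenT T l.prod ≤ l.length :=
  Nat.sInf_le ⟨l, hl, rfl, rfl⟩

theorem lenT_word {T : Set G} {x : G} (h : ∃ l : List G, (∀ t ∈ l, t ∈ T) ∧ l.prod = x) :
    ∃ l : List G, (∀ t ∈ l, t ∈ T) ∧ l.prod = x ∧ l.length = lenT T x := by
  obtain ⟨l, h1, h2⟩ := h
  exact Nat.sInf_mem (s := {n | ∃ l : List G, (∀ t ∈ l, t ∈ T) ∧ l.prod = x ∧ l.length = n})
    ⟨l.length, l, h1, h2, rfl⟩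

theorem word_of_closure {T : Set G} (hT : ∀ t ∈ T, t⁻¹ ∈ T) {x : G} (hx : x ∈ Subgroup.closure T) :
    ∃ l : List G, (∀ t ∈ l, t ∈ T) ∧ l.prod = x := by
  apply Submonoid.exists_list_of_mem_closure
  have h := Subgroup.closure_toSubmonoid T
  have h2 : T ∪ T⁻¹ = T := by
    apply Set.union_eq_self_of_subset_right
    intro t ht
    have := hT _ ht
    simpa using this
  rw [h2] at h
  rw [← h]
  exact hx

end lens

theorem threes_to_swaps {N : ℕ} (l : List (Perm (Fin N))) (hl : ∀ t ∈ l, t ∈ threeCycles N) :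
    ∃ l' : List (Perm (Fin N)), (∀ t ∈ l', t ∈ transpositions N) ∧ l'.prod = l.prod ∧
      l'.length = 2 * l.length := by
  induction l with
  | nil => exact ⟨[], by simp, rfl, rfl⟩
  | cons t l ih =>
    obtain ⟨l', h1, h2, h3⟩ := ih (fun s hs => hl s (by simp [hs]))
    obtain ⟨p, q, r, hpq, hpr, hqr, rfl⟩ := three_rep (hl t (by simp))
    refine ⟨swap p q :: swap p r :: l', ?_, ?_, ?_⟩
    · intro s hs
      simp only [List.mem_cons] at hs
      rcases hs with rfl | rfl | hs
      · exact ⟨p, q, hpq, rfl⟩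
      · exact ⟨p, r, hpr, rfl⟩
      · exact h1 s hs
    · simp [h2, mul_assoc]
    · simp [h3]; omega

theorem three_words {N : ℕ} {y : Perm (Fin N)} (hy : y ∈ alternatingGroup (Fin N)) :
    ∃ l : List (Perm (Fin N)), (∀ t ∈ l, t ∈ threeCycles N) ∧ l.prod = y := by
  refine word_of_closure (T := threeCycles N) ?_ ?_
  · intro t ht
    have h : t.IsThreeCycle := ht
    exact h.inv
  · have := closure_three_cycles_eq_alternating (α := Fin N)
    unfold threeCycles
    rw [this]
    exact hy

theorem swap_words {N : ℕ} (y : Perm (Fin N)) :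
    ∃ l : List (Perm (Fin N)), (∀ t ∈ l, t ∈ transpositions N) ∧ l.prod = y := by
  refine word_of_closure (T := transpositions N) ?_ ?_
  · rintro t ⟨a, b, hab, rfl⟩
    exact ⟨a, b, hab, by simp⟩
  · have := closure_isSwap (α := Fin N)
    unfold transpositions
    rw [this]; trivial

theorem stmt8 (n : ℕ) (x : Perm (Fin (2*n+1)))
    (hx : x ∈ alternatingGroup (Fin (2*n+1))) :
    leT (threeCycles (2*n+1)) x (finRotate (2*n+1)) ↔
      (leT (transpositions (2*n+1)) x (finRotate (2*n+1)) ∧ satisfiesOD x) := by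
  have hN : Odd (2 * n + 1) := ⟨n, rfl⟩
  have w3 : ∀ y ∈ alternatingGroup (Fin (2*n+1)), ∃ l : List (Perm (Fin (2*n+1))),
      (∀ t ∈ l, t ∈ threeCycles (2*n+1)) ∧ l.prod = y := by
    exact fun y hy => three_words hy
  have w2 : ∀ y : Perm (Fin (2*n+1)), ∃ l : List (Perm (Fin (2*n+1))),
      (∀ t ∈ l, t ∈ transpositions (2*n+1)) ∧ l.prod = y := by
    exact fun y => swap_words y
  set c := finRotate (2*n+1) with hc
  have hcA : c ∈ alternatingGroup (Fin (2*n+1)) := finRotate_bit1_mem_alternatingGroup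
  -- cycles of c
  have hcc : cyc c ≤ 1 := by
    have h1 := descs_add (x := c) (y := 1) (mul_one _)
    have h2 := cyc_le_descs c
    have h3 := cyc_le_descs (1 : Perm (Fin (2*n+1)))
    rw [cyc_one] at h3
    omega
  have hcorb : ∀ u, orbitF c u = Finset.univ := by
    intro u
    ext v
    simp only [Finset.mem_univ, iff_true]
    rw [mem_orbitF, ← orbitF_eq]
    exact Finset.card_le_one.1 hcc _ (Finset.mem_image_of_mem _ (Finset.mem_univ _)) _
      (Finset.mem_image_of_mem _ (Finset.mem_univ _))
  have hco : AllOdd c := by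
    intro u
    rw [hcorb u]
    simp
  have hc1 : 1 ≤ cyc c := Finset.card_pos.2 ⟨_, Finset.mem_image_of_mem _ (Finset.mem_univ 0)⟩
  have h3c : lenT (threeCycles (2*n+1)) c = n := by
    apply le_antisymm
    · obtain ⟨l, h1, h2, h3⟩ := threes_of_allOdd c hco
      have := lenT_le l h1
      rw [h2] at this
      omega
    · obtain ⟨l, h1, h2, h3⟩ := lenT_word (w3 c hcA)
      have := cyc_threes l h1
      rw [h2] at this
      omega
  have h2c : lenT (transpositions (2*n+1)) c = 2 * n := by
    apply le_antisymm
    · obtain ⟨l, h1, h2, h3⟩ := threes_of_allOdd c hco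
      obtain ⟨l', g1, g2, g3⟩ := threes_to_swaps l h1
      have := lenT_le l' g1
      rw [g2, h2] at this
      omega
    · obtain ⟨l, h1, h2, h3⟩ := lenT_word (w2 c)
      have := cyc_swaps l h1
      rw [h2] at this
      omega
  have hyA : x⁻¹ * c ∈ alternatingGroup (Fin (2*n+1)) :=
    Subgroup.mul_mem _ (Subgroup.inv_mem _ hx) hcA
  have hxy : x * (x⁻¹ * c) = c := by simp
  set y := x⁻¹ * c with hy
  unfold leT
  rw [← hy, h3c, h2c]
  obtain ⟨l1, a1, a2, a3⟩ := lenT_word (w3 x hx)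
  obtain ⟨l2, b1, b2, b3⟩ := lenT_word (w3 y hyA)
  obtain ⟨s1, e1, e2, e3⟩ := lenT_word (w2 x)
  obtain ⟨s2, f1, f2, f3⟩ := lenT_word (w2 y)
  have hd := descs_add hxy
  have dx := cyc_le_descs x
  have dy := cyc_le_descs y
  constructor
  · intro h
    obtain ⟨r1, r2, -, r4⟩ := down hN l2 l1 a1 b1 (by rw [a2, b2, hxy]) (by omega)
    rw [a2] at r1 r2 r4
    refine ⟨?_, od_of_kk r1 r2 r4⟩
    obtain ⟨l1', g1, g2, g3⟩ := threes_to_swaps l1 a1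
    obtain ⟨l2', k1, k2, k3⟩ := threes_to_swaps l2 b1
    have i1 := lenT_le l1' g1
    have i2 := lenT_le l2' k1
    rw [g2, a2] at i1
    rw [k2, b2] at i2
    have i3 := cyc_swaps s1 e1
    have i4 := cyc_swaps s2 f1
    rw [e2] at i3
    rw [f2] at i4
    omega
  · rintro ⟨h, hod⟩
    have i3 := cyc_swaps s1 e1
    have i4 := cyc_swaps s2 f1
    rw [e2] at i3
    rw [f2] at i4
    have Wx : DescOnce x := descOnce_of_le (by omega)
    have Wy : DescOnce y := descOnce_of_le (by omega)
    have kx := kk_of_od hN Wx hod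
    have ky : ∀ v, Odd (kk y v) := by
      intro v
      have j1 := kk_compl hxy v
      have j2 := kx (y v)
      rw [Int.odd_iff] at j2 ⊢
      push_cast at j1
      omega
    obtain ⟨m1, p1, p2, p3⟩ := threes_of_allOdd x (allOdd_of_kk hN Wx kx)
    obtain ⟨m2, q1, q2, q3⟩ := threes_of_allOdd y (allOdd_of_kk hN Wy ky)
    have i1 := lenT_le m1 p1
    have i2 := lenT_le m2 q1
    rw [p2] at i1
    rw [q2] at i2
    have i5 := cyc_threes l1 a1
    have i6 := cyc_threes l2 b1
    rw [a2] at i5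
    rw [b2] at i6
    omega
end

section
/- For N ≥ 3, the poset (ONC_N, ≤_3) is an induced subposet of the noncrossing partition lattice (NC_N, ≤_2): for x, y ∈ ONC_N, x ≤_3 y holds if and only if x ≤_2 y. -/
open Equiv Equiv.Perm

/-- Membership in `ONC_N`: a noncrossing partition all of whose cycles satisfy (OD). -/
def memONC {N : ℕ} (x : Perm (Fin N)) : Prop :=
  leT (transpositions N) x (finRotate N) ∧ satisfiesOD x

namespace S11

variable {N : ℕ}

/-- functions invariant under `σ` -/
def fixS (σ : Perm (Fin N)) : Submodule ℚ (Fin N → ℚ) where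
  carrier := {f | ∀ i, f (σ i) = f i}
  add_mem' := by
    intro a b ha hb i
    simp only [Pi.add_apply]
    rw [ha i, hb i]
  zero_mem' := by intro i; rfl
  smul_mem' := by
    intro c f hf i
    simp only [Pi.smul_apply]
    rw [hf i]

theorem mem_fixS {σ : Perm (Fin N)} {f : Fin N → ℚ} : f ∈ fixS σ ↔ ∀ i, f (σ i) = f i := Iff.rfl

/-- dimension of the fixed space -/
noncomputable def F (σ : Perm (Fin N)) : ℕ := Module.finrank ℚ (fixS σ)

theorem F_le (σ : Perm (Fin N)) : F σ ≤ N := by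
  have := Submodule.finrank_le (fixS σ)
  simpa [F] using this

theorem inf_le (x y : Perm (Fin N)) : fixS x ⊓ fixS y ≤ fixS (x * y) := by
  rintro f ⟨h1, h2⟩ i
  rw [Perm.mul_apply, h1 (y i), h2 i]

theorem F_one : F (1 : Perm (Fin N)) = N := by
  have : fixS (1 : Perm (Fin N)) = ⊤ := by
    ext f; simp [mem_fixS]
  rw [F, this]; simp

theorem dims (x y : Perm (Fin N)) :
    F x + F y ≤ Module.finrank ℚ (fixS x ⊓ fixS y : Submodule ℚ (Fin N → ℚ)) + N := by
  have h := Submodule.finrank_sup_add_finrank_inf_eq (fixS x) (fixS y)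
  have h2 := Submodule.finrank_le (fixS x ⊔ fixS y)
  simp only [Module.finrank_fintype_fun_eq_card, Fintype.card_fin] at h2
  unfold F
  omega

theorem F_mul (x y : Perm (Fin N)) : F x + F y ≤ F (x * y) + N := by
  have h := dims x y
  have h3 := Submodule.finrank_mono (inf_le x y)
  unfold F at *
  omega

theorem brady (x y : Perm (Fin N)) (h : F (x * y) + N ≤ F x + F y) :
    fixS (x * y) ≤ fixS x ∧ fixS (x * y) ≤ fixS y := by
  have h1 := dims x y
  have h2 : fixS x ⊓ fixS y = fixS (x * y) := by
    apply Submodule.eq_of_le_of_finrank_le (inf_le x y)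
    unfold F at *
    omega
  rw [← h2]
  exact ⟨inf_le_left, inf_le_right⟩

theorem F_conj_le (x z : Perm (Fin N)) : F x ≤ F (z⁻¹ * x * z) := by
  have h : (fixS x).map (LinearEquiv.funCongrLeft ℚ ℚ z : (Fin N → ℚ) →ₗ[ℚ] (Fin N → ℚ))
      ≤ fixS (z⁻¹ * x * z) := by
    rintro _ ⟨f, hf, rfl⟩ i
    simp [LinearMap.funLeft, hf (z i)]
  have h2 := Submodule.finrank_mono h
  rw [LinearEquiv.finrank_map_eq] at h2
  exact h2

theorem same_self (y : Perm (Fin N)) (j : Fin N) : y.SameCycle j (y j) := ⟨1, by simp⟩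

theorem same_of_inv {z : Perm (Fin N)} {S : Fin N → Prop} (hS : ∀ j, S j → S (z j)) {i v : Fin N}
    (h : z.SameCycle i v) (hi : S i) : S v := by
  obtain ⟨n, hn, rfl⟩ := h.exists_pow_eq'
  clear h hn
  induction n with
  | zero => simpa using hi
  | succ n ih => rw [pow_succ', Perm.mul_apply]; exact hS _ ih

theorem same_of_fix {y z : Perm (Fin N)} (h : fixS y ≤ fixS z) (i : Fin N) :
    y.SameCycle i (z i) := by
  classical
  let f : Fin N → ℚ := fun v => if y.SameCycle i v then 1 else 0
  have hf : f ∈ fixS y := by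
    intro j
    simp [f]
  have := h hf i
  by_contra hc
  simp [f, hc, SameCycle.refl] at this

theorem fix_same {y : Perm (Fin N)} {f : Fin N → ℚ} (hf : f ∈ fixS y) {i v : Fin N}
    (h : y.SameCycle i v) : f v = f i := by
  apply same_of_inv (S := fun v => f v = f i) _ h rfl
  intro j hj
  rw [hf j, hj]

theorem F_swap (a b : Fin N) : N ≤ F (swap a b) + 1 := by
  let L : (Fin N → ℚ) →ₗ[ℚ] ℚ :=
    (LinearMap.proj a : (Fin N → ℚ) →ₗ[ℚ] ℚ) - (LinearMap.proj b : (Fin N → ℚ) →ₗ[ℚ] ℚ)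
  have h1 : LinearMap.ker L ≤ fixS (swap a b) := by
    intro f hf i
    have hf' : f a = f b := by
      have : f a - f b = 0 := hf
      linarith
    by_cases h1 : i = a
    · subst h1; simp [hf']
    · by_cases h2 : i = b
      · subst h2; simp [hf']
      · rw [Equiv.swap_apply_of_ne_of_ne h1 h2]
  have h2 := Submodule.finrank_mono h1
  have h3 := LinearMap.finrank_range_add_finrank_ker L
  have h4 := Submodule.finrank_le (LinearMap.range L)
  simp at h3 h4
  unfold F
  omega

theorem F_step {σ : Perm (Fin N)} {a : Fin N} (ha : σ a ≠ a) :
    F σ + 1 ≤ F (swap a (σ a) * σ) := by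
  have hs : ∀ i, (swap a (σ a) * σ) i = σ i ∨ (swap a (σ a) * σ) i = σ a ∨
      ((swap a (σ a) * σ) i = a) := by
    intro i
    rw [Perm.mul_apply, Equiv.swap_apply_def]
    split_ifs <;> simp
  have hle : fixS σ < fixS (swap a (σ a) * σ) := by
    refine lt_of_le_of_ne ?_ ?_
    · intro f hf i
      rw [Perm.mul_apply, Equiv.swap_apply_def]
      split_ifs with h1 h2
      · rw [hf a, ← hf i, h1]
      · rw [← hf i, h2, hf a]
      · exact hf i
    · intro he
      have : (Pi.single a 1 : Fin N → ℚ) ∈ fixS (swap a (σ a) * σ) := by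
        intro i
        have : (swap a (σ a) * σ) i = a ↔ i = a := by
          constructor
          · intro h
            apply (swap a (σ a) * σ).injective
            rw [h]; simp
          · rintro rfl; simp
        simp only [Pi.single_apply, this]
      rw [← he] at this
      have := this a
      simp [Pi.single_apply, ha] at this
  exact Submodule.finrank_lt_finrank_of_lt hle

theorem word2 (k : ℕ) : ∀ σ : Perm (Fin N), N - F σ ≤ k →
    ∃ l : List (Perm (Fin N)), (∀ t ∈ l, t ∈ transpositions N) ∧ l.prod = σ ∧
      l.length ≤ N - F σ := by
  induction k with
  | zero =>
    intro σ h
    have : σ = 1 := by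
      by_contra hc
      have : ∃ a, σ a ≠ a := by
        by_contra h'; push Not at h'; exact hc (Equiv.ext h')
      obtain ⟨a, ha⟩ := this
      have h1 := F_step ha
      have h2 := F_le (swap a (σ a) * σ)
      omega
    exact ⟨[], by simp, by simp [this], by simp⟩
  | succ k ih =>
    intro σ h
    by_cases hc : ∃ a, σ a ≠ a
    · obtain ⟨a, ha⟩ := hc
      have h1 := F_step ha
      have h2 := F_le (swap a (σ a) * σ)
      obtain ⟨l, hl, hp, hlen⟩ := ih (swap a (σ a) * σ) (by omega)
      refine ⟨swap a (σ a) :: l, ?_, ?_, ?_⟩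
      · intro t ht
        rcases List.mem_cons.mp ht with rfl | ht
        · exact ⟨a, σ a, ha.symm, rfl⟩
        · exact hl t ht
      · rw [List.prod_cons, hp, ← mul_assoc, Equiv.swap_mul_self, one_mul]
      · simp; omega
    · push Not at hc
      have : σ = 1 := Equiv.ext hc
      exact ⟨[], by simp, by simp [this], by simp⟩

theorem word_bound (T : Set (Perm (Fin N))) (c : ℕ) (hT : ∀ t ∈ T, N ≤ F t + c)
    (l : List (Perm (Fin N))) (hl : ∀ t ∈ l, t ∈ T) : N ≤ F l.prod + c * l.length := by
  induction l with
  | nil => simp [F_one]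
  | cons t l ih =>
    have h1 := ih (fun t ht => hl t (List.mem_cons_of_mem _ ht))
    have h2 := hT t (hl t List.mem_cons_self)
    have h3 := F_mul t l.prod
    rw [List.prod_cons, List.length_cons, mul_add]
    omega

theorem lenT_le {T : Set (Perm (Fin N))} {l : List (Perm (Fin N))} (hl : ∀ t ∈ l, t ∈ T) :
    lenT T l.prod ≤ l.length := Nat.sInf_le ⟨l, hl, rfl, rfl⟩

theorem lenT_spec {T : Set (Perm (Fin N))} {l : List (Perm (Fin N))} (hl : ∀ t ∈ l, t ∈ T) :
    ∃ l' : List (Perm (Fin N)), (∀ t ∈ l', t ∈ T) ∧ l'.prod = l.prod ∧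
      l'.length = lenT T l.prod :=
  Nat.sInf_mem (s := {n | ∃ l' : List (Perm (Fin N)), (∀ t ∈ l', t ∈ T) ∧ l'.prod = l.prod ∧
    l'.length = n}) ⟨l.length, l, hl, rfl, rfl⟩

theorem len2 (σ : Perm (Fin N)) : lenT (transpositions N) σ = N - F σ := by
  obtain ⟨l, hl, hp, hlen⟩ := word2 _ σ le_rfl
  subst hp
  have h1 := lenT_le hl
  obtain ⟨l', hl', hp', hlen'⟩ := lenT_spec hl
  have h2 := word_bound (transpositions N) 1 (by
    rintro t ⟨a, b, _, rfl⟩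
    exact F_swap a b) l' hl'
  rw [hp'] at h2
  omega

theorem le2_iff (x y : Perm (Fin N)) :
    leT (transpositions N) x y ↔ F y + N = F x + F (x⁻¹ * y) := by
  unfold leT
  rw [len2, len2, len2]
  have := F_le x
  have := F_le y
  have := F_le (x⁻¹ * y)
  omega

/-- no eigenvalue -1 -/
def OddC (σ : Perm (Fin N)) : Prop := ∀ f : Fin N → ℚ, (∀ i, f (σ i) = - f i) → f = 0

theorem F_three {t : Perm (Fin N)} (ht : t ∈ threeCycles N) : N ≤ F t + 2 := by
  have h3 : t.IsThreeCycle := ht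
  obtain ⟨a, ha⟩ : ∃ a, t a ≠ a := by
    by_contra h; push Not at h
    exact h3.ne_one (Equiv.ext h)
  have := (h3.eq_swap_mul_swap_iff_mem_support (a := a)).mpr (by simpa using ha)
  rw [this]
  have h1 := F_swap a (t a)
  have h2 := F_swap (t a) (t (t a))
  have h4 := F_mul (swap a (t a)) (swap (t a) (t (t a)))
  omega

/-- step with a 3-cycle -/
theorem F_step3 {σ : Perm (Fin N)} {a b c : Fin N} (hb : σ a = b) (hc : σ b = c) (hab : a ≠ b)
    (hac : a ≠ c) (hbc : b ≠ c) :
    F σ + 2 ≤ F (swap a b * swap a c * σ) := by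
  have hca : (swap a b * swap a c * σ) a = a := by
    simp [hb, Equiv.swap_apply_def, hab.symm, hbc]
  have hcb : (swap a b * swap a c * σ) b = b := by
    simp [hc]
  set τ := swap a b * swap a c * σ with hτ
  let V : Submodule ℚ (Fin N → ℚ) := LinearMap.range
    ((LinearMap.single ℚ (fun _ => ℚ) a).coprod (LinearMap.single ℚ (fun _ : Fin N => ℚ) b))
  have hV : Module.finrank ℚ V = 2 := by
    rw [LinearMap.finrank_range_of_inj]
    · simp
    · intro p q h
      have h1 := congrFun h a
      have h2 := congrFun h b
      simp [Pi.single_apply, hab, hab.symm] at h1 h2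
      exact Prod.ext h1 h2
  have hsub : fixS σ ⊔ V ≤ fixS τ := by
    apply sup_le
    · intro f hf i
      have e1 : f b = f a := by rw [← hb]; exact hf a
      have e2 : f c = f a := by rw [← hc, hf b, e1]
      have : ∀ j, f ((swap a b * swap a c) j) = f j := by
        intro j
        rw [Perm.mul_apply, Equiv.swap_apply_def, Equiv.swap_apply_def]
        split_ifs <;> simp_all
      rw [hτ, Perm.mul_apply, this, hf i]
    · rintro _ ⟨⟨p, q⟩, rfl⟩ i
      have ia : τ i = a ↔ i = a := ⟨fun h => τ.injective (h.trans hca.symm), fun h => h ▸ hca⟩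
      have ib : τ i = b ↔ i = b := ⟨fun h => τ.injective (h.trans hcb.symm), fun h => h ▸ hcb⟩
      simp [Pi.single_apply, ia, ib]
  have hinf : fixS σ ⊓ V = ⊥ := by
    rw [eq_bot_iff]
    rintro f ⟨hf, ⟨⟨p, q⟩, rfl⟩⟩
    have h1 := hf a
    have h2 := hf b
    rw [hb] at h1
    rw [hc] at h2
    simp [Pi.single_apply, hab, hab.symm, hac.symm, hbc.symm] at h1 h2
    have hp : p = 0 := by rw [← h1, ← h2]
    subst hp
    simp [← h2]
  have h1 := Submodule.finrank_sup_add_finrank_inf_eq (fixS σ) V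
  have h2 := Submodule.finrank_mono hsub
  rw [hinf, hV] at h1
  simp at h1
  unfold F
  omega

theorem OddC_step {σ : Perm (Fin N)} {a b c : Fin N} (hb : σ a = b) (hc : σ b = c) (hab : a ≠ b)
    (hac : a ≠ c) (hbc : b ≠ c) (h : OddC σ) : OddC (swap a b * swap a c * σ) := by
  intro g hg
  have hca : (swap a b * swap a c * σ) a = a := by
    simp [hb, Equiv.swap_apply_def, hab.symm, hbc]
  have hcb : (swap a b * swap a c * σ) b = b := by
    simp [hc]
  have ga : g a = 0 := by have := hg a; rw [hca] at this; linarith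
  have gb : g b = 0 := by have := hg b; rw [hcb] at this; linarith
  let f : Fin N → ℚ := fun i => if i = a then g c else if i = b then - g c else g i
  have hf : f = 0 := by
    apply h
    intro i
    by_cases h1 : i = a
    · subst h1; simp [f, hb, hab.symm]
    by_cases h2 : i = b
    · subst h2; simp [f, hc, hac.symm, hbc.symm, hab.symm]
    have h3 : σ i ≠ b := fun h => h1 (σ.injective (h.trans hb.symm))
    have h4 : σ i ≠ c := fun h => h2 (σ.injective (h.trans hc.symm))
    have h5 := hg i
    by_cases h6 : σ i = a
    · have : (swap a b * swap a c * σ) i = c := by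
        simp [h6, Equiv.swap_apply_def, hac.symm, hbc.symm]
      rw [this] at h5
      simp [f, h6, h1, h2, h5]
    · have : (swap a b * swap a c * σ) i = σ i := by
        simp [Equiv.swap_apply_def, h6, h3, h4]
      rw [this] at h5
      simp [f, h6, h1, h2, h5, h3]
  funext i
  have h1 := congrFun hf i
  by_cases h2 : i = a
  · rw [h2, ga]; rfl
  by_cases h3 : i = b
  · rw [h3, gb]; rfl
  simpa [f, h2, h3] using h1

theorem word3 (k : ℕ) : ∀ σ : Perm (Fin N), OddC σ → N - F σ ≤ k →
    ∃ l : List (Perm (Fin N)), (∀ t ∈ l, t ∈ threeCycles N) ∧ l.prod = σ ∧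
      2 * l.length ≤ N - F σ := by
  induction k using Nat.strong_induction_on with
  | _ k ih =>
    intro σ ho h
    by_cases hc : ∃ a, σ a ≠ a
    · obtain ⟨a, ha⟩ := hc
      have hab : a ≠ σ a := ha.symm
      have hbc : σ a ≠ σ (σ a) := fun h => hab (σ.injective h)
      have hac : a ≠ σ (σ a) := by
        intro he
        have := ho (fun i => if i = a then 1 else if i = σ a then -1 else 0) (by
          intro i
          by_cases h1 : i = a
          · subst h1; simp [ha]
          by_cases h2 : i = σ a
          · subst h2; simp [← he, ha]
          have h3 : σ i ≠ σ a := fun h => h1 (σ.injective h)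
          have h4 : σ i ≠ a := fun h => h2 (σ.injective (h.trans he))
          simp [h1, h2, h3, h4])
        have := congrFun this a
        simp at this
      have h1 := F_step3 rfl rfl hab hac hbc
      have h2 := OddC_step rfl rfl hab hac hbc ho
      have h3 := F_le (swap a (σ a) * swap a (σ (σ a)) * σ)
      obtain ⟨l, hl, hp, hlen⟩ := ih (k - 1) (by omega) _ h2 (by omega)
      refine ⟨(swap a (σ a) * swap a (σ (σ a)))⁻¹ :: l, ?_, ?_, ?_⟩
      · intro t ht
        rcases List.mem_cons.mp ht with rfl | ht
        · exact (isThreeCycle_swap_mul_swap_same hab hac hbc).inv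
        · exact hl t ht
      · rw [List.prod_cons, hp, inv_mul_cancel_left]
      · simp only [List.length_cons]; omega
    · push Not at hc
      have : σ = 1 := Equiv.ext hc
      exact ⟨[], by simp, by simp [this], by simp⟩

theorem len3_ge {σ : Perm (Fin N)} {l : List (Perm (Fin N))} (hl : ∀ t ∈ l, t ∈ threeCycles N)
    (hp : l.prod = σ) : N - F σ ≤ 2 * lenT (threeCycles N) σ := by
  subst hp
  obtain ⟨l', hl', hp', hlen'⟩ := lenT_spec hl
  have h2 := word_bound (threeCycles N) 2 (fun t ht => F_three ht) l' hl'
  rw [hp'] at h2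
  omega

theorem len3 {σ : Perm (Fin N)} (h : OddC σ) : 2 * lenT (threeCycles N) σ = N - F σ := by
  obtain ⟨l, hl, hp, hlen⟩ := word3 _ σ h le_rfl
  have h2 := len3_ge hl hp
  subst hp
  have h1 := lenT_le hl
  omega

theorem forward {x y : Perm (Fin N)} (hx : OddC x) (hy : OddC y)
    (h : leT (threeCycles N) x y) : leT (transpositions N) x y := by
  rw [le2_iff]
  unfold leT at h
  have h1 := len3 hx
  have h2 := len3 hy
  have h3 : N - F (x⁻¹ * y) ≤ 2 * lenT (threeCycles N) (x⁻¹ * y) := by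
    obtain ⟨l, hl, hp, -⟩ := word3 _ x hx le_rfl
    obtain ⟨l', hl', hp', -⟩ := word3 _ y hy le_rfl
    apply len3_ge (l := (l.map (·⁻¹)).reverse ++ l')
    · intro t ht
      simp only [List.mem_append, List.mem_reverse, List.mem_map] at ht
      rcases ht with ⟨s, hs, rfl⟩ | ht
      · exact IsThreeCycle.inv (hl s hs)
      · exact hl' t ht
    · rw [List.prod_append, ← List.prod_inv_reverse, hp, hp']
  have h4 := F_mul x (x⁻¹ * y)
  rw [mul_inv_cancel_left] at h4
  have := F_le x
  have := F_le y
  have := F_le (x⁻¹ * y)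
  omega

theorem backward {x y : Perm (Fin N)} (hx : OddC x) (hy : OddC y) (hz : OddC (x⁻¹ * y))
    (h : leT (transpositions N) x y) : leT (threeCycles N) x y := by
  rw [le2_iff] at h
  unfold leT
  have h1 := len3 hx
  have h2 := len3 hy
  have h3 := len3 hz
  have := F_le x
  have := F_le y
  have := F_le (x⁻¹ * y)
  omega

/-- cyclic order: going up cyclically from `i` (exclusive), `k` is met no later than `v` -/
def cyc (i k v : Fin N) : Prop :=
  (i.val < k.val ∧ k.val ≤ v.val) ∨ (v.val ≤ i.val ∧ i.val < k.val) ∨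
    (k.val ≤ v.val ∧ v.val ≤ i.val)

/-- `y i` is the cyclic successor of `i` in its cycle -/
def P (y : Perm (Fin N)) : Prop := ∀ i v, y.SameCycle i v → cyc i (y i) v

theorem P_rot (N : ℕ) : P (finRotate N) := by
  intro i v _
  cases N with
  | zero => exact i.elim0
  | succ n =>
    have hr : (finRotate (n + 1) i).val = if i = Fin.last n then 0 else i.val + 1 := coe_finRotate i
    unfold cyc
    have hv := v.isLt
    split_ifs at hr with h
    · have hi : i.val = n := by rw [h]; rfl
      omega
    · have hi : i.val ≠ n := fun h' => h (Fin.ext h')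
      omega

theorem P_step {y : Perm (Fin N)} {a b : Fin N} (hy : P y) (hab : a ≠ b)
    (hs : y.SameCycle a b) : P (y * swap a b) := by
  have hab' : a.val ≠ b.val := fun h => hab (Fin.ext h)
  have ha : (y * swap a b) a = y b := by simp
  have hb : (y * swap a b) b = y a := by simp
  have ho : ∀ v, v ≠ a → v ≠ b → (y * swap a b) v = y v := by
    intro v h1 h2
    rw [Perm.mul_apply, Equiv.swap_apply_of_ne_of_ne h1 h2]
  have hsub : ∀ i v, (y * swap a b).SameCycle i v → y.SameCycle i v := by
    intro i v h
    refine same_of_inv (S := fun v => y.SameCycle i v) ?_ h (SameCycle.refl _ _)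
    intro j hj
    by_cases h1 : j = a
    · subst h1; rw [ha]; exact (hj.trans hs).trans (same_self _ _)
    by_cases h2 : j = b
    · subst h2; rw [hb]; exact (hj.trans hs.symm).trans (same_self _ _)
    rw [ho j h1 h2]; exact hj.trans (same_self _ _)
  -- generic: the arc
  let A : Fin N → Prop := fun v => (a.val < v.val ∧ v.val ≤ b.val) ∨ (v.val ≤ b.val ∧ b.val < a.val)
    ∨ (b.val < a.val ∧ a.val < v.val)
  have hA : ∀ v, (y * swap a b).SameCycle b v → A v := by
    intro v h
    refine (same_of_inv (S := fun v => y.SameCycle a v ∧ A v) ?_ h ⟨hs, ?_⟩).2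
    · rintro j ⟨hj, hA⟩
      by_cases h1 : j = a
      · subst h1; simp only [A] at hA; omega
      by_cases h2 : j = b
      · subst h2; rw [hb]; refine ⟨same_self _ _, ?_⟩
        have := hy a _ hs
        simp only [A, cyc] at *; omega
      rw [ho j h1 h2]
      refine ⟨hj.trans (same_self _ _), ?_⟩
      have := hy j b (hj.symm.trans hs)
      have : j.val ≠ b.val := fun h => h2 (Fin.ext h)
      simp only [A, cyc] at *; omega
    · simp only [A]; omega
  have hA' : ∀ v, (y * swap a b).SameCycle a v → ¬ A v := by
    intro v h
    refine (same_of_inv (S := fun v => y.SameCycle a v ∧ ¬ A v) ?_ h ⟨SameCycle.refl _ _, ?_⟩).2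
    · rintro j ⟨hj, hA⟩
      by_cases h1 : j = a
      · subst h1; rw [ha]; refine ⟨hs.trans (same_self _ _), ?_⟩
        have := hy b _ hs.symm
        simp only [A, cyc] at *; omega
      by_cases h2 : j = b
      · subst h2; simp only [A] at hA; omega
      rw [ho j h1 h2]
      refine ⟨hj.trans (same_self _ _), ?_⟩
      have := hy j a hj.symm
      have : j.val ≠ a.val := fun h => h1 (Fin.ext h)
      simp only [A, cyc] at *; omega
    · simp only [A]; omega
  intro i v h
  have hiv := hsub i v h
  by_cases h1 : i = a
  · subst h1
    have q1 := hA' v h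
    have q2 := hA' (y b) (by rw [← ha]; exact same_self _ _)
    have q3 := hy b v (hs.symm.trans hiv)
    rw [ha]
    simp only [A, cyc] at *; omega
  by_cases h2 : i = b
  · subst h2
    have q1 := hA v h
    have q2 := hA (y a) (by rw [← hb]; exact same_self _ _)
    have q3 := hy a v (hs.trans hiv)
    rw [hb]
    simp only [A, cyc] at *; omega
  rw [ho i h1 h2]
  exact hy i v hiv

theorem P_le (c : Perm (Fin N)) (hc : P c) (k : ℕ) : ∀ y u : Perm (Fin N), N - F u ≤ k → y * u = c →
    F c + N = F y + F u → P y := by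
  induction k with
  | zero =>
    intro y u hk hyu _
    have : u = 1 := by
      by_contra hc
      have : ∃ a, u a ≠ a := by
        by_contra h'; push Not at h'; exact hc (Equiv.ext h')
      obtain ⟨a, ha⟩ := this
      have h1 := F_step ha
      have h2 := F_le (swap a (u a) * u)
      omega
    subst this
    rw [mul_one] at hyu
    rwa [hyu]
  | succ k ih =>
    intro y u hk hyu hF
    by_cases hu : ∃ a, u a ≠ a
    · obtain ⟨a, ha⟩ := hu
      have h1 := F_step ha
      have h2 := F_le (swap a (u a) * u)
      set s := swap a (u a) with hs
      have hss : s * s = 1 := Equiv.swap_mul_self _ _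
      have e1 : (y * s) * (s * u) = c := by
        rw [mul_assoc, ← mul_assoc s, hss, one_mul, hyu]
      have h3 := F_mul (y * s) (s * u)
      rw [e1] at h3
      have h4 := F_mul y s
      have h5 : N ≤ F s + 1 := F_swap _ _
      have h6 := F_le s
      have h7 : P (y * s) := ih (y * s) (s * u) (by omega) e1 (by omega)
      have h9 := F_mul (y * s) s
      have hyss : y * s * s = y := by rw [mul_assoc, hss, mul_one]
      rw [hyss] at h9
      have hsN : F s < N := by
        have := F_step (σ := s) (a := a) (by simpa [hs] using ha)
        have := F_le (swap a (s a) * s)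
        omega
      have h8 := (brady y s (by omega)).2
      have hsame := same_of_fix h8 a
      have hsa : s a = u a := by simp [hs]
      rw [hsa] at hsame
      have := P_step h7 ha.symm hsame
      rwa [← hs, hyss] at this
    · push Not at hu
      have : u = 1 := Equiv.ext hu
      subst this
      rw [mul_one] at hyu
      rwa [hyu]

/-- parity of the steps -/
def Par (x : Perm (Fin N)) : Prop := ∀ i, if i.val < (x i).val then ((x i).val + i.val) % 2 = 1
  else ((x i).val + i.val) % 2 = 0

theorem mem_orbitF (x : Perm (Fin N)) (a b : Fin N) : b ∈ orbitF x a ↔ x.SameCycle a b := by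
  simp [orbitF]

theorem OddC_of_OD {x : Perm (Fin N)} (h : satisfiesOD x) : OddC x := by
  intro f hf
  funext a
  by_contra ha
  have ha : f a ≠ 0 := ha
  have hne : ∀ v, x.SameCycle a v → f v ≠ 0 := by
    intro v hv
    refine same_of_inv (S := fun v => f v ≠ 0) ?_ hv ha
    intro j hj
    rw [hf j]
    exact neg_ne_zero.mpr hj
  have h1 : ∏ i ∈ orbitF x a, f (x i) = ∏ i ∈ orbitF x a, f i := by
    apply Finset.prod_equiv x
    · intro i
      rw [mem_orbitF, mem_orbitF]
      constructor
      · intro h; exact h.trans (same_self _ _)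
      · intro h; exact h.trans (same_self _ _).symm
    · intro i _; rfl
  have h2 : ∏ i ∈ orbitF x a, f (x i) = - ∏ i ∈ orbitF x a, f i := by
    simp only [hf]
    rw [Finset.prod_neg, (h a).1.neg_one_pow]
    ring
  have h3 : ∏ i ∈ orbitF x a, f i ≠ 0 := by
    rw [Finset.prod_ne_zero_iff]
    intro i hi
    exact hne i ((mem_orbitF _ _ _).1 hi)
  apply h3
  linarith

theorem chain_facts (l : List (Fin N))
    (hc : (l.map Fin.val).IsChain (fun a b => Odd (b - a)))
    (k d : ℕ) (h : k + d < l.length) :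
    l[k].val + d ≤ (l[k + d]).val ∧ (l[k].val + d + (l[k + d]).val) % 2 = 0 := by
  induction d with
  | zero => simp; omega
  | succ d ih =>
    have h1 := ih (by omega)
    have h2 := List.isChain_iff_getElem.mp hc (k + d) (by rw [List.length_map]; omega)
    simp only [List.getElem_map] at h2
    simp only [← add_assoc]
    have h3 := Nat.odd_iff.mp h2
    omega

theorem par_of_OD {x : Perm (Fin N)} (hP : P x) (h : satisfiesOD x) : Par x := by
  intro i
  obtain ⟨hodd, hch0⟩ := h i
  have hch : (((orbitF x i).sort (· ≤ ·)).map Fin.val).IsChain (fun a b => Odd (b - a)) := by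
    have e : (((orbitF x i).sort (· ≤ ·)).map Fin.val) =
        (do let a ← (orbitF x i).sort (· ≤ ·); pure a.val) := by
      exact List.map_eq_flatMap
    rw [e]
    exact hch0
  clear hch0
  have hlen : ((orbitF x i).sort (· ≤ ·)).length = (orbitF x i).card := Finset.length_sort _
  have hmem : ∀ v, v ∈ (orbitF x i).sort (· ≤ ·) ↔ x.SameCycle i v := by
    intro v; rw [Finset.mem_sort, mem_orbitF]
  generalize (orbitF x i).sort (· ≤ ·) = l at *
  rw [← hlen] at hodd
  have hodd := Nat.odd_iff.mp hodd
  obtain ⟨k, hk, ek⟩ := List.getElem_of_mem ((hmem i).2 (SameCycle.refl _ _))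
  obtain ⟨k', hk', ek'⟩ := List.getElem_of_mem ((hmem (x i)).2 (same_self _ _))
  have facts := chain_facts l hch
  have hcyc : ∀ j (hj : j < l.length), cyc i (x i) l[j] := fun j hj =>
    hP i _ ((hmem _).1 (List.getElem_mem hj))
  split_ifs with hlt
  · have hkk : k < k' := by
      by_contra hc
      obtain ⟨d, rfl⟩ := Nat.exists_eq_add_of_le (not_lt.mp hc)
      have := (facts k' d hk).1
      rw [ek, ek'] at this
      omega
    obtain ⟨d, rfl⟩ := Nat.exists_eq_add_of_le (Nat.succ_le_of_lt hkk)
    have e1 := facts k 1 (by omega)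
    have e2 := facts (k + 1) d hk'
    have e3 := hcyc (k + 1) (by omega)
    simp only [Nat.succ_eq_add_one] at ek'
    rw [ek'] at e2
    rw [ek] at e1
    unfold cyc at e3
    have : d = 0 := by omega
    subst this
    omega
  · have e1 := facts 0 k' (by omega)
    have e2 := facts k (l.length - 1 - k) (by omega)
    have e3 := facts 0 k (by omega)
    have c1 := hcyc 0 (by omega)
    have c2 := hcyc (k + (l.length - 1 - k)) (by omega)
    simp only [zero_add] at e1 e3
    rw [ek'] at e1
    rw [ek] at e2 e3
    unfold cyc at c1 c2
    omega

theorem OddC_of_par {z : Perm (Fin N)} (hP : P z) (h : Par z) : OddC z := by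
  intro f hf
  let g : Fin N → ℚ := fun j => f j * (-1) ^ j.val
  have g1 : ∀ j, j.val < (z j).val → g (z j) = g j := by
    intro j hj
    have hp := h j
    rw [if_pos hj] at hp
    simp only [g, hf j]
    rcases Nat.even_or_odd j.val with he | he
    · have : Odd (z j).val := by rw [Nat.odd_iff]; rw [Nat.even_iff] at he; omega
      rw [he.neg_one_pow, this.neg_one_pow]; ring
    · have : Even (z j).val := by rw [Nat.even_iff]; rw [Nat.odd_iff] at he; omega
      rw [he.neg_one_pow, this.neg_one_pow]; ring
  have g2 : ∀ j, ¬ j.val < (z j).val → g (z j) = - g j := by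
    intro j hj
    have hp := h j
    rw [if_neg hj] at hp
    simp only [g, hf j]
    rcases Nat.even_or_odd j.val with he | he
    · have : Even (z j).val := by rw [Nat.even_iff] at *; omega
      rw [he.neg_one_pow, this.neg_one_pow]; ring
    · have : Odd (z j).val := by rw [Nat.odd_iff] at *; omega
      rw [he.neg_one_pow, this.neg_one_pow]; ring
  funext a
  have hne : (orbitF z a).Nonempty := ⟨a, (mem_orbitF _ _ _).2 (SameCycle.refl _ _)⟩
  obtain ⟨m, hm, hmin⟩ := (orbitF z a).exists_min_image (fun v => v.val) hne
  rw [mem_orbitF] at hm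
  have hmin' : ∀ v, z.SameCycle m v → m.val ≤ v.val := fun v hv =>
    hmin v ((mem_orbitF _ _ _).2 (hm.trans hv))
  have key : ∀ n : ℕ, ∀ j : Fin N, j.val = n → z.SameCycle m j → g j = g m := by
    intro n
    induction n using Nat.strong_induction_on with
    | _ n ih =>
      intro j hj hs
      by_cases hjm : j = m
      · rw [hjm]
      have hjm' : j.val ≠ m.val := fun h => hjm (Fin.ext h)
      have hz : z (z⁻¹ j) = j := by simp
      set p := z⁻¹ j with hp
      have hsp : z.SameCycle m p := by
        have := same_self z p
        rw [hz] at this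
        exact hs.trans this.symm
      have c := hP p m hsp.symm
      have l1 := hmin' p hsp
      have l2 := hmin' j hs
      rw [hz] at c
      unfold cyc at c
      have hlt : p.val < j.val := by omega
      have := g1 p (by rw [hz]; exact hlt)
      rw [hz] at this
      rw [this]
      exact ih p.val (by omega) p rfl hsp
  have hz : z (z⁻¹ m) = m := by simp
  have hsp : z.SameCycle m (z⁻¹ m) := by
    have := same_self z (z⁻¹ m)
    rw [hz] at this
    exact this.symm
  have q1 := key _ (z⁻¹ m) rfl hsp
  have q2 := g2 (z⁻¹ m) (by rw [hz]; have := hmin' _ hsp; omega)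
  rw [hz] at q2
  have q3 := key _ a rfl hm.symm
  have q4 : g a = 0 := by linarith
  simp only [g] at q4
  rcases mul_eq_zero.mp q4 with h | h
  · exact h
  · exact absurd h (pow_ne_zero _ (by norm_num))

theorem main_odd {x y : Perm (Fin N)} (hx : memONC x) (hy : memONC y)
    (h : leT (transpositions N) x y) : OddC (x⁻¹ * y) := by
  have hxc := (le2_iff _ _).1 hx.1
  have hyc := (le2_iff _ _).1 hy.1
  rw [le2_iff] at h
  have hPx := P_le _ (P_rot N) _ x _ le_rfl (mul_inv_cancel_left _ _) hxc
  have hPy := P_le _ (P_rot N) _ y _ le_rfl (mul_inv_cancel_left _ _) hyc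
  have px := par_of_OD hPx hx.2
  have py := par_of_OD hPy hy.2
  have hxz : x * (x⁻¹ * y) = y := mul_inv_cancel_left _ _
  set z := x⁻¹ * y with hz
  have hPz : P z := by
    have e : z * ((z⁻¹ * x * z) * (y⁻¹ * finRotate N)) = finRotate N := by
      rw [hz]; group
    have f1 := F_mul z ((z⁻¹ * x * z) * (y⁻¹ * finRotate N))
    rw [e] at f1
    have f2 := F_mul (z⁻¹ * x * z) (y⁻¹ * finRotate N)
    have f3 := F_conj_le x z
    exact P_le _ (P_rot N) _ z _ le_rfl e (by omega)
  apply OddC_of_par hPz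
  have hfix : fixS y ≤ fixS z := by
    have := (brady x z (by rw [hxz]; omega)).2
    rwa [hxz] at this
  intro i
  have c := hPy i (z i) (same_of_fix hfix i)
  have p1 := py i
  have p2 := px (z i)
  have e : x (z i) = y i := by rw [← Perm.mul_apply, hxz]
  rw [e] at p2
  unfold cyc at c
  split_ifs at p1 p2 ⊢ <;> omega

end S11

theorem stmt11 (N : ℕ) (hN : 3 ≤ N) (x y : Perm (Fin N))
    (hx : memONC x) (hy : memONC y) :
    leT (threeCycles N) x y ↔ leT (transpositions N) x y := by
  have ox := S11.OddC_of_OD hx.2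
  have oy := S11.OddC_of_OD hy.2
  exact ⟨S11.forward ox oy, fun h => S11.backward ox oy (S11.main_odd hx hy h) h⟩
end

section
/- Let F_N(q) = Σ_{x ∈ A_N} q^{ocyc(x)} where ocyc(x) is the number of odd cycles of x including fixed points. Then the exponential generating function Σ_{N≥0} F_N(q) t^N/N! equals (1/2)[(1+t)^{(q-1)/2}(1-t)^{-(q+1)/2} + (1+t)^{(q+1)/2}(1-t)^{-(q-1)/2}]. -/
open Equiv Equiv.Perm

open scoped Classical in
/-- `F_N(q) = ∑_{x ∈ A_N} q^{ocyc(x)}`. -/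
noncomputable def Fpoly (N : ℕ) (q : ℝ) : ℝ :=
  ∑ x ∈ Finset.univ.filter (fun x : Perm (Fin N) => x ∈ alternatingGroup (Fin N)),
    q ^ ocyc x

open Finset in
noncomputable def zc (s : Multiset ℕ) : ℝ := (s.prod : ℝ) * ∏ n ∈ s.toFinset, ((s.count n).factorial : ℝ)

noncomputable def wt (w : ℕ → ℝ) (s : Multiset ℕ) : ℝ := (s.map w).prod / zc s

noncomputable def Aw (w : ℕ → ℝ) (n : ℕ) : ℝ := ∑ l : n.Partition, wt w l.parts

lemma zc_eq (s : Multiset ℕ) (T : Finset ℕ) (h : s.toFinset ⊆ T) :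
    zc s = (s.prod : ℝ) * ∏ n ∈ T, ((s.count n).factorial : ℝ) := by
  unfold zc
  congr 1
  apply Finset.prod_subset h
  intro x _ hx
  rw [Multiset.mem_toFinset] at hx
  simp [Multiset.count_eq_zero_of_notMem hx]

lemma zc_cons (i : ℕ) (s : Multiset ℕ) :
    zc (i ::ₘ s) = i * (s.count i + 1) * zc s := by
  have hi : i ∈ insert i s.toFinset := Finset.mem_insert_self _ _
  rw [zc_eq (i ::ₘ s) (insert i s.toFinset) (by simp), zc_eq s (insert i s.toFinset) (by simp),
    ← Finset.mul_prod_erase _ _ hi, ← Finset.mul_prod_erase _ (fun n => ((s.count n).factorial : ℝ)) hi]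
  have : ∏ n ∈ (insert i s.toFinset).erase i, (((i ::ₘ s).count n).factorial : ℝ)
      = ∏ n ∈ (insert i s.toFinset).erase i, ((s.count n).factorial : ℝ) := by
    apply Finset.prod_congr rfl
    intro x hx
    rw [Multiset.count_cons_of_ne (Finset.ne_of_mem_erase hx)]
  rw [this, Multiset.count_cons_self, Nat.factorial_succ, Multiset.prod_cons]
  push_cast
  ring

lemma wt_cons (w : ℕ → ℝ) (i : ℕ) (hi : 1 ≤ i) (s : Multiset ℕ) :
    ((i ::ₘ s).count i * i : ℝ) * wt w (i ::ₘ s) = w i * wt w s := by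
  unfold wt
  rw [zc_cons, Multiset.count_cons_self]
  have h1 : (i : ℝ) ≠ 0 := by positivity
  have h2 : (s.count i + 1 : ℝ) ≠ 0 := by positivity
  push_cast
  simp only [Multiset.map_cons, Multiset.prod_cons]
  by_cases hz : zc s = 0
  · simp [hz]
  field_simp

lemma Aw_rec (w : ℕ → ℝ) (n : ℕ) :
    (n : ℝ) * Aw w n = ∑ i ∈ Finset.Icc 1 n, w i * Aw w (n - i) := by
  have h1 : ∀ l : n.Partition, (n : ℝ) = ∑ i ∈ Finset.Icc 1 n, (l.parts.count i * i : ℝ) := by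
    intro l
    have := l.parts_sum
    rw [Finset.sum_multiset_count_of_subset l.parts (Finset.Icc 1 n)] at this
    · conv_lhs => rw [← this]
      push_cast [smul_eq_mul]
      rfl
    · intro x hx
      rw [Multiset.mem_toFinset] at hx
      exact Finset.mem_Icc.2 ⟨l.parts_pos hx, l.le_of_mem_parts hx⟩
  unfold Aw
  rw [Finset.mul_sum]
  rw [Finset.sum_congr rfl (fun l _ => by rw [h1 l, Finset.sum_mul]), Finset.sum_comm]
  apply Finset.sum_congr rfl
  intro i hi
  obtain ⟨hi1, hi2⟩ := Finset.mem_Icc.1 hi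
  rw [Finset.mul_sum]
  symm
  calc ∑ l : (n - i).Partition, w i * wt w l.parts
      = ∑ l : {p : n.Partition // i ∈ p.parts}, ((l.1.parts.count i * i : ℝ) * wt w l.1.parts) := by
        refine (Fintype.sum_equiv (Nat.Partition.partitionWithPartEquiv hi1 hi2) _ _ ?_).symm
        rintro ⟨l, hl⟩
        have h := wt_cons w i hi1 (l.parts.erase i)
        rw [Multiset.cons_erase hl] at h
        rw [h]
        simp
    _ = _ := by
        refine (Finset.sum_subtype (Finset.univ.filter (fun l : n.Partition => i ∈ l.parts))
          (p := fun l : n.Partition => i ∈ l.parts) (by simp)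
          (fun l : n.Partition => (l.parts.count i * i : ℝ) * wt w l.parts)).symm.trans ?_
        apply Finset.sum_subset (Finset.filter_subset _ _)
        intro l _ hl
        have hl' : i ∉ l.parts := by simpa using hl
        simp [Multiset.count_eq_zero_of_notMem hl']

lemma card_part {α : Type*} [Fintype α] [DecidableEq α] (l : (Fintype.card α).Partition) :
    ((Finset.univ.filter (fun x : Perm α => x.partition = l)).card : ℝ) * zc l.parts
      = (Fintype.card α).factorial := by
  set m := l.parts.filter (fun n => 2 ≤ n) with hm
  have hl : l.parts = m + Multiset.replicate (l.parts.count 1) 1 := by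
    conv_lhs => rw [← Multiset.filter_add_not (fun n => 2 ≤ n) l.parts]
    congr 1
    rw [← Multiset.filter_eq' l.parts 1]
    apply Multiset.filter_congr
    intro x hx
    have := l.parts_pos hx
    omega
  have hsum : m.sum + l.parts.count 1 = Fintype.card α := by
    have := l.parts_sum
    rw [hl] at this
    simpa [-Multiset.count_add] using this
  have hset : (Finset.univ.filter (fun x : Perm α => x.partition = l))
      = Finset.univ.filter (fun x : Perm α => x.cycleType = m) := by
    ext x
    simp only [Finset.mem_filter, Finset.mem_univ, true_and]
    constructor
    · rintro rfl
      exact filter_parts_partition_eq_cycleType.symm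
    · intro h
      rw [Nat.Partition.ext_iff, parts_partition, ← sum_cycleType, h, hl]
      congr 2
      omega
  have h := card_of_cycleType_mul_eq α m
  rw [if_pos ⟨by omega, by simp [hm]⟩] at h
  rw [hset, ← h, zc_eq l.parts (insert 1 m.toFinset)]
  · have h1 : 1 ∉ m.toFinset := by simp [hm]
    rw [Finset.prod_insert h1]
    have : Fintype.card α - m.sum = l.parts.count 1 := by omega
    rw [this]
    have hp : l.parts.prod = m.prod := by
      conv_lhs => rw [hl]
      simp
    rw [hp]
    push_cast
    have : ∏ n ∈ m.toFinset, ((l.parts.count n).factorial : ℝ) = ∏ n ∈ m.toFinset, ((m.count n).factorial : ℝ) := by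
      apply Finset.prod_congr rfl
      intro n hn
      rw [Multiset.mem_toFinset, hm, Multiset.mem_filter] at hn
      rw [hm, Multiset.count_filter_of_pos hn.2]
    rw [this]
    ring
  · intro x hx
    rw [Multiset.mem_toFinset] at hx
    have := l.parts_pos hx
    simp only [Finset.mem_insert, Multiset.mem_toFinset, hm, Multiset.mem_filter, hx, true_and]
    omega

lemma sum_perm {α : Type*} [Fintype α] [DecidableEq α] (w : ℕ → ℝ) :
    ∑ x : Perm α, (x.partition.parts.map w).prod
      = (Fintype.card α).factorial * Aw w (Fintype.card α) := by
  rw [← Finset.sum_fiberwise (s := Finset.univ) (g := fun x : Perm α => x.partition)]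
  unfold Aw
  rw [Finset.mul_sum]
  apply Finset.sum_congr rfl
  intro l _
  have hc := card_part (α := α) l
  have hz : zc l.parts ≠ 0 := by
    intro h
    rw [h, mul_zero] at hc
    exact (Nat.cast_ne_zero.2 (Nat.factorial_ne_zero _)) hc.symm
  rw [← hc, Finset.sum_congr rfl (g := fun _ => (l.parts.map w).prod)]
  · simp only [Finset.sum_const, nsmul_eq_mul, wt]
    field_simp
  · intro x hx
    rw [(Finset.mem_filter.1 hx).2]

noncomputable def we (q e : ℝ) (n : ℕ) : ℝ := if Odd n then q else e

lemma we_prod (q e : ℝ) (s : Multiset ℕ) : (s.map (we q e)).prod =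
    q ^ (s.filter (fun n => Odd n)).card * e ^ (s.filter (fun n => ¬ Odd n)).card := by
  induction s using Multiset.induction_on with
  | empty => simp
  | cons a s ih =>
    rw [Multiset.map_cons, Multiset.prod_cons, ih]
    by_cases h : Odd a
    · rw [Multiset.filter_cons_of_pos _ h, Multiset.filter_cons_of_neg (p := fun n => ¬ Odd n) _ (not_not.2 h),
        Multiset.card_cons, we, if_pos h]
      ring
    · rw [Multiset.filter_cons_of_neg _ h, Multiset.filter_cons_of_pos (p := fun n => ¬ Odd n) _ h,
        Multiset.card_cons, we, if_neg h]
      ring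

lemma we_perm (q e : ℝ) {N : ℕ} (x : Perm (Fin N)) : (x.partition.parts.map (we q e)).prod =
    q ^ ocyc x * e ^ (x.cycleType.filter (fun n => ¬ Odd n)).card := by
  rw [parts_partition, Multiset.map_add, Multiset.prod_add, we_prod, ocyc, ← sum_cycleType]
  simp [we, pow_add]
  ring

lemma sgn (x : Multiset ℕ) : (-1 : ℤˣ) ^ (x.sum + x.card) =
   (-1 : ℤˣ) ^ (x.filter (fun n => ¬ Odd n)).card := by
  induction x using Multiset.induction_on with
  | empty => simp
  | cons a s ih =>
    rw [Multiset.sum_cons, Multiset.card_cons, show a + s.sum + (s.card + 1) = (a+1) + (s.sum + s.card) by ring, pow_add, ih]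
    by_cases h : Odd a
    · rw [Multiset.filter_cons_of_neg (p := fun n => ¬ Odd n) _ (not_not.2 h), pow_succ, h.neg_one_pow]
      simp
    · have h' := Nat.not_odd_iff_even.1 h
      rw [Multiset.filter_cons_of_pos (p := fun n => ¬ Odd n) _ h, Multiset.card_cons, pow_succ, pow_succ, h'.neg_one_pow]
      simp

lemma Fpoly_eq (N : ℕ) (q : ℝ) : Fpoly N q / (N.factorial : ℝ) = (1/2) * (Aw (we q 1) N + Aw (we q (-1)) N) := by
  have h0 : ∀ e, ∑ x : Perm (Fin N), (x.partition.parts.map (we q e)).prod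
      = N.factorial * Aw (we q e) N := by
    intro e
    refine (sum_perm (α := Fin N) (we q e)).trans ?_
    rw [Fintype.card_fin]
  have h1 := h0 1
  have h2 := h0 (-1)
  have hN : (N.factorial : ℝ) ≠ 0 := by positivity
  have : Fpoly N q = (1/2) * (∑ x : Perm (Fin N), (x.partition.parts.map (we q 1)).prod + ∑ x : Perm (Fin N), (x.partition.parts.map (we q (-1))).prod) := by
    rw [← Finset.sum_add_distrib, Finset.mul_sum, Fpoly, Finset.sum_filter]
    apply Finset.sum_congr rfl
    intro x _
    rw [we_perm, we_perm, mem_alternatingGroup, sign_of_cycleType, sgn]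
    rcases Nat.even_or_odd (x.cycleType.filter (fun n => ¬ Odd n)).card with h | h
    · rw [h.neg_one_pow, h.neg_one_pow]; simp; ring
    · rw [h.neg_one_pow, h.neg_one_pow, if_neg (by decide)]; simp
  rw [this, h1, h2]
  field_simp

lemma Aw_zero (w : ℕ → ℝ) : Aw w 0 = 1 := by
  simp [Aw, wt, zc]

lemma Aw_one (q e : ℝ) : Aw (we q e) 1 = q := by
  have := Aw_rec (we q e) 1
  simpa [Aw_zero, we] using this

lemma Icc_sum (f : ℕ → ℝ) (n : ℕ) : ∑ i ∈ Finset.Icc 1 n, f i = ∑ i ∈ Finset.range n, f (i+1) := by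
  rw [Finset.range_eq_Ico, Finset.sum_Ico_add' f 0 n 1]
  rfl

lemma Aw_rec2 (q e : ℝ) (n : ℕ) :
    (n + 2 : ℝ) * Aw (we q e) (n+2) = q * Aw (we q e) (n+1) + (n + e) * Aw (we q e) n := by
  have h1 := Aw_rec (we q e) (n+2)
  have h2 := Aw_rec (we q e) n
  rw [Icc_sum] at h1 h2
  rw [Finset.sum_range_succ', Finset.sum_range_succ'] at h1
  have h3 : ∑ i ∈ Finset.range n, we q e (i + 1 + 1 + 1) * Aw (we q e) (n + 2 - (i + 1 + 1 + 1))
      = ∑ i ∈ Finset.range n, we q e (i + 1) * Aw (we q e) (n - (i + 1)) := by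
    apply Finset.sum_congr rfl
    intro i _
    congr 1
    · simp [we, Nat.odd_add_one]
    · congr 1; omega
  rw [h3, ← h2] at h1
  have w1 : we q e 1 = q := by simp [we]
  have w2 : we q e 2 = e := by simp [we]
  norm_num [w1, w2] at h1
  linarith

lemma choose_rec (a : ℝ) (n : ℕ) :
    (n + 1 : ℝ) * Ring.choose a (n+1) = (a - n) * Ring.choose a n := by
  have := Ring.choose_smul_choose a (Nat.le_succ n)
  simp at this
  linarith

open PowerSeries in
lemma coeff_rec (a b : ℝ) (n : ℕ) (u v : PowerSeries ℝ)
    (hu : u = PowerSeries.mk (fun n => Ring.choose a n))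
    (hv : v = PowerSeries.mk (fun n => Ring.choose b n * (-1)^n)) :
    (n + 2 : ℝ) * coeff (n+2) (u * v) = (a - b) * coeff (n+1) (u*v) + (n - (a+b)) * coeff n (u*v) ∧
    coeff 1 (u * v) = (a - b) := by
  have du : derivative ℝ u = C a * u - X * derivative ℝ u := by
    ext n
    rcases n with _ | n
    · have := choose_rec a 0
      simp [hu, coeff_derivative] at *
    · have := choose_rec a (n+1)
      simp [hu, coeff_derivative, coeff_succ_X_mul] at *
      linarith
  have dv : derivative ℝ v = X * derivative ℝ v - C b * v := by
    ext n
    rcases n with _ | n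
    · have := choose_rec b 0
      simp [hv, coeff_derivative] at *
    · have := choose_rec b (n+1)
      simp [hv, coeff_derivative, coeff_succ_X_mul, pow_succ] at *
      linear_combination (-1)^n * this
  have h : derivative ℝ (u * v) = X * (X * derivative ℝ (u * v)) + C (a - b) * (u * v) - X * (C (a+b) * (u * v)) := by
    have e1 : derivative ℝ (u * v) = u * derivative ℝ v + v * derivative ℝ u := by
      simp [Derivation.leibniz]
    rw [e1, map_sub, map_add]
    linear_combination (1 - X) * v * du + (1 + X) * u * dv
  generalize a - b = c, a + b = d at h ⊢
  have hc := fun n => congrArg (coeff n) h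
  constructor
  · have := hc (n+1)
    rcases n with _ | n
    · simp only [map_add, map_sub, coeff_succ_X_mul, coeff_derivative, coeff_C_mul, coeff_zero_X_mul] at this
      push_cast at *
      linarith
    · simp only [map_add, map_sub, coeff_succ_X_mul, coeff_derivative, coeff_C_mul] at this
      push_cast at *
      linarith
  · have h0 : coeff 0 (u * v) = 1 := by simp [hu, hv]
    have := hc 0
    simp only [map_add, map_sub, coeff_derivative, coeff_C_mul, coeff_zero_X_mul, h0] at this
    push_cast at *
    linarith

lemma HasSum.congr_fun' {f g : ℕ → ℝ} {a : ℝ} (h : HasSum f a) (hfg : ∀ n, g n = f n) :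
    HasSum g a := by
  rwa [funext hfg]

lemma uniq (f g : ℕ → ℝ) (p r : ℝ) (h0 : f 0 = g 0) (h1 : f 1 = g 1)
    (hf : ∀ n : ℕ, (n + 2 : ℝ) * f (n+2) = p * f (n+1) + (n + r) * f n)
    (hg : ∀ n : ℕ, (n + 2 : ℝ) * g (n+2) = p * g (n+1) + (n + r) * g n) (n : ℕ) : f n = g n := by
  induction n using Nat.twoStepInduction with
  | zero => exact h0
  | one => exact h1
  | more n i1 i2 =>
    have h : (n + 2 : ℝ) ≠ 0 := by positivity
    apply mul_left_cancel₀ h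
    rw [hf, hg, i1, i2]

lemma binom (a t : ℝ) (ht : |t| < 1) :
    HasSum (fun n => Ring.choose a n * t ^ n) ((1 + t) ^ a) ∧
    Summable (fun n => ‖Ring.choose a n * t ^ n‖) := by
  have hb : t ∈ Metric.eball (0 : ℝ) 1 := by
    rw [mem_eball_zero_iff, ← ofReal_norm]
    simpa using ht
  constructor
  · have := (Real.one_add_rpow_hasFPowerSeriesOnBall_zero (a := a)).hasSum hb
    simpa only [binomialSeries_apply, List.ofFn_const, List.prod_replicate, smul_eq_mul, zero_add] using this
  · have := (binomialSeries ℝ a).summable_norm_apply (Metric.eball_subset_eball binomialSeries_radius_ge_one hb)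
    simpa only [binomialSeries_apply, List.ofFn_const, List.prod_replicate, smul_eq_mul] using this

lemma egf (q e a b t : ℝ) (ht : |t| < 1) (hab : a - b = q) (hab2 : -(a + b) = e) :
    HasSum (fun N => Aw (we q e) N * t ^ N) ((1+t)^a * (1-t)^b) := by
  obtain ⟨h1, h2⟩ := binom a t ht
  obtain ⟨h3, h4⟩ := binom b (-t) (by simpa using ht)
  have h := hasSum_sum_range_mul_of_summable_norm h2 h4
  rw [h1.tsum_eq, h3.tsum_eq, ← sub_eq_add_neg] at h
  refine h.congr_fun' ?_
  intro N
  set u := PowerSeries.mk (fun n => Ring.choose a n) with hu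
  set v := PowerSeries.mk (fun n => Ring.choose b n * (-1)^n) with hv
  have hA := uniq (fun n => Aw (we q e) n) (fun n => PowerSeries.coeff n (u * v)) q e
    (by simp [Aw_zero, hu, hv]) (by rw [Aw_one, (coeff_rec a b 0 u v hu hv).2, hab])
    (Aw_rec2 q e) (fun n => by
      have := (coeff_rec a b n u v hu hv).1
      rw [this, hab, ← hab2]; ring) N
  rw [hA, PowerSeries.coeff_mul, Finset.Nat.sum_antidiagonal_eq_sum_range_succ_mk, Finset.sum_mul]
  apply Finset.sum_congr rfl
  intro k hk
  have hk' : k ≤ N := Nat.lt_succ_iff.1 (Finset.mem_range.1 hk)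
  rw [hu, hv, PowerSeries.coeff_mk, PowerSeries.coeff_mk, neg_pow t]
  have : t ^ N = t ^ k * t ^ (N - k) := by rw [← pow_add]; congr 1; omega
  rw [this]
  ring

theorem stmt12 (q t : ℝ) (ht : |t| < 1) :
    HasSum (fun N : ℕ => Fpoly N q * t ^ N / (Nat.factorial N : ℝ))
      ((1/2) * ((1+t) ^ ((q-1)/2) * (1-t) ^ (-(q+1)/2)
        + (1+t) ^ ((q+1)/2) * (1-t) ^ (-(q-1)/2))) := by
  have h1 := egf q 1 ((q-1)/2) (-(q+1)/2) t ht (by ring) (by ring)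
  have h2 := egf q (-1) ((q+1)/2) (-(q-1)/2) t ht (by ring) (by ring)
  have h := (h1.add h2).mul_left (1/2)
  refine h.congr_fun' ?_
  intro N
  rw [mul_div_right_comm, Fpoly_eq]
  ring
end
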